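/- arXiv:2509.26297 — 8 statements merged into one kernel-verified Lean document; each statement's English description precedes it below -/
import Mathlib

section
/- For every complex number z with 0 < |z| < 1, the power series Σ_{n≥1} √n · z^n converges and equals G(z); that is, Σ_{n≥1} n^{1/2} z^n = (√π/2) · Σ_{n∈ℤ} (2πin − Log z)^{−3/2}. -/
/-!
With `w = -Log z`, whose real part is positive, the terms of the power series are the values at the
natural numbers of `f t = √t · exp (-w t)`. Since `Real.sqrt` vanishes on the negative axis, `f` is
a continuous function on `ℝ`, zero on `(-∞, 0]` and exponentially small at `+∞`, and the power
series is `Σ_{n ∈ ℤ} f n`. The result is Poisson summation applied to `f`.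

The Fourier transform of `f` at `ξ` is the Laplace transform of `√t` at `w + 2πiξ`, and
`∫ √t · exp (-s t) dt = Γ(3/2) · s ^ (-3/2)` for `Re s > 0` (`integral_sqrt_mul_cexp`), with
`Γ(3/2) = √π/2`. For real `s` this is the Gamma integral; both sides are holomorphic in `s`, the
left one because it is a moment generating function of the measure `√t dt`, so the identity
theorem extends it to the half plane. The resulting `O(|ξ| ^ (-3/2))` decay of the Fourier
transform is what Poisson summation needs.
-/

/-- 't Hooft's analytically continued fractional polylogarithm
`G(z) = (√π/2) · Σ_{n∈ℤ} (2πin − Log z)^{−3/2}`. -/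
noncomputable def G (z : ℂ) : ℂ :=
  (Real.sqrt Real.pi / 2) *
    ∑' n : ℤ, (2 * (Real.pi : ℂ) * Complex.I * (n : ℂ) - Complex.log z) ^ (-(3 : ℂ) / 2)

open MeasureTheory Filter Topology ProbabilityTheory Asymptotics FourierTransform

lemma integral_sqrt_mul_exp {s : ℝ} (hs : 0 < s) :
    ∫ t : ℝ, Real.sqrt t * Real.exp (-(s * t)) = (√Real.pi / 2) * s ^ (-(3 / 2) : ℝ) := by
  have key := Real.integral_rpow_mul_exp_neg_mul_Ioi (a := 3 / 2) (by norm_num) hs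
  have hG : Real.Gamma (3 / 2) = √Real.pi / 2 := by
    rw [show (3 / 2 : ℝ) = 1 / 2 + 1 by norm_num, Real.Gamma_add_one (by norm_num),
      Real.Gamma_one_half_eq]
    ring
  have hrest : ∫ t : ℝ in Set.Ioi 0, Real.sqrt t * Real.exp (-(s * t))
      = ∫ t : ℝ, Real.sqrt t * Real.exp (-(s * t)) := by
    apply setIntegral_eq_integral_of_forall_compl_eq_zero
    intro t ht
    rw [Real.sqrt_eq_zero_of_nonpos (by simpa using ht), zero_mul]
  rw [← hrest, mul_comm, Real.rpow_neg hs.le, ← Real.inv_rpow hs.le, ← one_div, ← hG, ← key]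
  simp_rw [Real.sqrt_eq_rpow]
  norm_num

/-- The measure `√t dt` on `ℝ`, concentrated on `[0, ∞)` because `Real.sqrt` vanishes on negative
numbers. -/
noncomputable def sqrtMeasure : Measure ℝ :=
  volume.withDensity (fun t => ENNReal.ofReal (Real.sqrt t))

lemma complexMGF_sqrtMeasure (s : ℂ) :
    complexMGF id sqrtMeasure s = ∫ t : ℝ, (Real.sqrt t : ℂ) * Complex.exp (s * t) := by
  unfold complexMGF sqrtMeasure
  rw [integral_withDensity_eq_integral_toReal_smul (by fun_prop) (by simp)]
  simp [Real.sqrt_nonneg]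

lemma Iio_subset_integrableExpSet : Set.Iio 0 ⊆ integrableExpSet id sqrtMeasure := by
  intro x hx
  have hx' : 0 < -x := by simpa using hx
  have h := integral_sqrt_mul_exp hx'
  have hint : Integrable (fun t : ℝ => Real.sqrt t * Real.exp (-(-x * t))) :=
    .of_integral_ne_zero (by rw [h]; positivity)
  simp only [integrableExpSet, Set.mem_ofPred_eq, sqrtMeasure]
  rw [integrable_withDensity_iff_integrable_smul' (by fun_prop) (by simp)]
  simpa [Real.sqrt_nonneg] using hint

/-- The Laplace transform of `√t` on the right half plane, by analytic continuation from the
positive real axis. -/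
lemma integral_sqrt_mul_cexp {s : ℂ} (hs : 0 < s.re) :
    ∫ t : ℝ, (Real.sqrt t : ℂ) * Complex.exp (-s * t)
      = (√Real.pi / 2) * s ^ (-(3 : ℂ) / 2) := by
  have hU : IsOpen {z : ℂ | z.re < 0} := isOpen_lt Complex.continuous_re continuous_const
  have hf : AnalyticOnNhd ℂ (complexMGF id sqrtMeasure) {z : ℂ | z.re < 0} :=
    analyticOnNhd_complexMGF.mono fun z hz =>
      interior_maximal Iio_subset_integrableExpSet isOpen_Iio hz
  have hg : AnalyticOnNhd ℂ (fun z : ℂ => (√Real.pi / 2 : ℂ) * (-z) ^ (-(3 : ℂ) / 2))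
      {z : ℂ | z.re < 0} := by
    apply DifferentiableOn.analyticOnNhd _ hU
    intro z hz
    have hz' : -z ∈ Complex.slitPlane := Or.inl (by simpa using hz)
    exact ((differentiableAt_id.neg.cpow_const hz').const_mul _).differentiableWithinAt
  have hreal : ∀ x : ℝ, x < 0 → complexMGF id sqrtMeasure x
      = (√Real.pi / 2 : ℂ) * (-(x : ℂ)) ^ (-(3 : ℂ) / 2) := by
    intro x hx
    have h := congrArg ((↑) : ℝ → ℂ) (integral_sqrt_mul_exp (neg_pos.mpr hx))
    rw [← integral_complex_ofReal] at h
    rw [complexMGF_sqrtMeasure]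
    push_cast [Complex.ofReal_cpow (neg_pos.mpr hx).le] at h
    simpa only [neg_mul, neg_neg, neg_div] using h
  have hfreq : ∃ᶠ z in 𝓝[≠] (-1 : ℂ), complexMGF id sqrtMeasure z
      = (√Real.pi / 2 : ℂ) * (-z) ^ (-(3 : ℂ) / 2) := by
    have htend : Tendsto ((↑) : ℝ → ℂ) (𝓝[≠] (-1 : ℝ)) (𝓝[≠] (-1 : ℂ)) := by
      apply tendsto_nhdsWithin_of_tendsto_nhds_of_eventually_within
      · have := Complex.continuous_ofReal.tendsto (-1)
        push_cast at this
        exact this.mono_left nhdsWithin_le_nhds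
      · filter_upwards [self_mem_nhdsWithin] with x hx
        exact fun h => hx (by simpa using congrArg Complex.re h)
    refine htend.frequently (Eventually.frequently ?_)
    filter_upwards [nhdsWithin_le_nhds (Iio_mem_nhds (show (-1 : ℝ) < 0 by norm_num))] with x hx
    exact hreal x hx
  have hconn : IsPreconnected {z : ℂ | z.re < 0} := (convex_halfSpace_re_lt 0).isPreconnected
  have := hf.eqOn_of_preconnected_of_frequently_eq hg hconn (z₀ := -1) (by simp) hfreq
    (show -s ∈ {z : ℂ | z.re < 0} by simpa using hs)
  rw [complexMGF_sqrtMeasure] at this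
  simpa using this

lemma fourier_sqrt_mul_cexp {w : ℂ} (hw : 0 < w.re) (ξ : ℝ) :
    𝓕 (fun t : ℝ => (Real.sqrt t : ℂ) * Complex.exp (-w * t)) ξ
      = (√Real.pi / 2) * (2 * (Real.pi : ℂ) * Complex.I * ξ + w) ^ (-(3 : ℂ) / 2) := by
  rw [Real.fourier_real_eq_integral_exp_smul, ← integral_sqrt_mul_cexp (by simpa using hw)]
  congr 1 with t
  rw [smul_eq_mul, mul_left_comm, ← Complex.exp_add]
  push_cast
  ring_nf

lemma sqrt_mul_cexp_isBigO {w : ℂ} (hw : 0 < w.re) :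
    (fun t : ℝ => (Real.sqrt t : ℂ) * Complex.exp (-w * t))
      =O[cocompact ℝ] fun t => |t| ^ (-(3 / 2) : ℝ) := by
  rw [cocompact_eq_atBot_atTop, isBigO_sup]
  constructor
  · refine (EventuallyEq.trans_isBigO ?_ (isBigO_zero _ _))
    filter_upwards [eventually_le_atBot 0] with t ht
    simp [Real.sqrt_eq_zero_of_nonpos ht]
  · have h := (isBigO_refl (fun t : ℝ => t ^ (1 / 2 : ℝ)) atTop).mul
      (isLittleO_exp_neg_mul_rpow_atTop hw (-2)).isBigO
    refine (IsBigO.of_norm_left ?_)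
    refine (h.congr' ?_ ?_)
    · filter_upwards [eventually_gt_atTop 0] with t ht
      simp [Complex.norm_exp, Real.sqrt_eq_rpow, abs_of_pos (Real.rpow_pos_of_pos ht _)]
    · filter_upwards [eventually_gt_atTop 0] with t ht
      rw [abs_of_pos ht, ← Real.rpow_add ht]
      norm_num

lemma cpow_line_isBigO (w : ℂ) :
    (fun ξ : ℝ => (√Real.pi / 2 : ℂ) * (2 * (Real.pi : ℂ) * Complex.I * ξ + w) ^ (-(3 : ℂ) / 2))
      =O[cocompact ℝ] fun ξ => |ξ| ^ (-(3 / 2) : ℝ) := by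
  apply IsBigO.const_mul_left
  refine IsBigO.of_bound 1 ?_
  filter_upwards [(tendsto_norm_cocompact_atTop (E := ℝ)).eventually_ge_atTop (‖w‖ + 1)] with ξ hξ
  rw [Real.norm_eq_abs] at hξ
  have hpos : 0 < |ξ| := by linarith [norm_nonneg w]
  have hle : |ξ| ≤ ‖2 * (Real.pi : ℂ) * Complex.I * ξ + w‖ := by
    have h1 := norm_sub_le_norm_add (2 * (Real.pi : ℂ) * Complex.I * ξ) w
    have h2 : ‖2 * (Real.pi : ℂ) * Complex.I * ξ‖ = 2 * Real.pi * |ξ| := by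
      simp [abs_of_pos Real.pi_pos]
    nlinarith [Real.pi_gt_three]
  have hne : 2 * (Real.pi : ℂ) * Complex.I * ξ + w ≠ 0 := norm_pos_iff.mp (hpos.trans_le hle)
  rw [Complex.norm_cpow_of_ne_zero hne, one_mul, Real.norm_of_nonneg (by positivity)]
  have e1 : (-(3 : ℂ) / 2) = ((-(3 / 2) : ℝ) : ℂ) := by push_cast; ring
  rw [e1, Complex.ofReal_re, Complex.ofReal_im, mul_zero, Real.exp_zero, div_one]
  exact Real.rpow_le_rpow_of_nonpos hpos hle (by norm_num)

/-- For `0 < |z| < 1`, the power series `Σ_{n≥1} √n zⁿ` converges with sum `G(z)`. -/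
theorem sqrt_series_hasSum_G (z : ℂ) (h0 : 0 < ‖z‖) (h1 : ‖z‖ < 1) :
    HasSum (fun n : ℕ => (Real.sqrt n : ℂ) * z ^ n) (G z) := by
  have hz : z ≠ 0 := norm_pos_iff.mp h0
  have hw : 0 < (-Complex.log z).re := by
    rw [Complex.neg_re, Complex.log_re]
    exact neg_pos.mpr (Real.log_neg h0 h1)
  set f : ℝ → ℂ := fun t => (Real.sqrt t : ℂ) * Complex.exp (- -Complex.log z * t) with hf
  have hfnat : ∀ n : ℕ, f ((n : ℤ) : ℝ) = (Real.sqrt n : ℂ) * z ^ n := by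
    intro n
    simp only [hf, neg_neg, Int.cast_natCast, Complex.ofReal_natCast]
    rw [mul_comm (Complex.log z), Complex.exp_nat_mul, Complex.exp_log hz]
  have hfsupp : ∀ m : ℤ, m ∉ Set.range ((↑) : ℕ → ℤ) → f m = 0 := by
    intro m hm
    have hm' : m ≤ 0 := by
      by_contra! h
      exact hm ⟨m.toNat, Int.toNat_of_nonneg h.le⟩
    simp [hf, Real.sqrt_eq_zero_of_nonpos (Int.cast_nonpos.mpr hm' : (m : ℝ) ≤ 0)]
  have hbig := sqrt_mul_cexp_isBigO hw
  have hsum : Summable fun m : ℤ => f m :=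
    summable_of_isBigO (Real.summable_abs_int_rpow (b := 3 / 2) (by norm_num))
      (hbig.comp_tendsto Int.tendsto_coe_cofinite)
  have hFf : 𝓕 f =O[cocompact ℝ] fun ξ => |ξ| ^ (-(3 / 2) : ℝ) := by
    rw [funext (fourier_sqrt_mul_cexp hw)]
    exact cpow_line_isBigO _
  have hpoisson := Real.tsum_eq_tsum_fourier_of_rpow_decay (f := f) (by fun_prop)
    (by norm_num : (1 : ℝ) < 3 / 2) hbig hFf 0
  have hG : ∑' m : ℤ, f m = G z := by
    simp only [zero_add] at hpoisson
    rw [hpoisson, G, ← tsum_mul_left]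
    refine tsum_congr fun n => ?_
    rw [hf, fourier_sqrt_mul_cexp hw]
    simp [sub_eq_add_neg]
  have hZ : HasSum (fun m : ℤ => f m) (G z) := hG ▸ hsum.hasSum
  rw [← Function.Injective.hasSum_iff Nat.cast_injective hfsupp] at hZ
  convert hZ using 2 with n
  exact (hfnat n).symm
end

section
/- The function G is holomorphic on the open set ℂ ∖ ([1,∞) ∪ {0}); together with its agreement with Σ_{n≥1} √n z^n on the punctured unit disc, it therefore provides the analytic continuation of the fractional polylogarithm Σ_{n≥1} √n z^n to ℂ ∖ ([1,∞) ∪ {0}). -/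
open Complex Filter Topology MeasureTheory Set Asymptotics

/-! ### Laplace and Fourier transforms of the square root -/

lemma norm_sqrt_mul_exp (w : ℂ) (t : ℝ) :
    ‖(√t : ℂ) * cexp (-(w * t))‖ = √t * Real.exp (-(w.re * t)) := by
  rw [norm_mul, Complex.norm_exp, Complex.norm_real, Real.norm_of_nonneg (Real.sqrt_nonneg t)]
  simp

lemma integrableOn_rpow_mul_exp {s c : ℝ} (hs : -1 < s) (hc : 0 < c) :
    IntegrableOn (fun t : ℝ => t ^ s * Real.exp (-(c * t))) (Ioi 0) := by
  simpa using integrableOn_rpow_mul_exp_neg_mul_rpow hs one_pos hc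

lemma differentiableAt_laplace {w : ℂ} (hw : 0 < w.re) :
    DifferentiableAt ℂ (fun w : ℂ => ∫ t in Ioi (0 : ℝ), (√t : ℂ) * cexp (-(w * t))) w := by
  have hre : ∀ x ∈ Metric.ball w (w.re / 2), w.re / 2 < x.re := by
    intro x hx
    rw [Metric.mem_ball, dist_eq_norm] at hx
    have h := (Complex.abs_re_le_norm (x - w)).trans_lt hx
    rw [Complex.sub_re, abs_lt] at h
    linarith
  have hmeas : ∀ x : ℂ, AEStronglyMeasurable (fun t : ℝ => (√t : ℂ) * cexp (-(x * t)))
      (volume.restrict (Ioi (0 : ℝ))) := fun x =>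
    Continuous.aestronglyMeasurable (by fun_prop)
  refine (hasDerivAt_integral_of_dominated_loc_of_deriv_le
    (F' := fun (w : ℂ) (t : ℝ) => (√t : ℂ) * (cexp (-(w * t)) * -(t : ℂ)))
    (bound := fun t : ℝ => t ^ (3 / 2 : ℝ) * Real.exp (-(w.re / 2 * t)))
    (Metric.ball_mem_nhds w (half_pos hw)) (.of_forall hmeas) ?_ ?_ ?_ ?_ ?_).2.differentiableAt
  · refine (integrableOn_rpow_mul_exp (s := 1 / 2) (by norm_num) hw).mono' (hmeas w) ?_
    refine .of_forall fun t => ?_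
    rw [norm_sqrt_mul_exp, Real.sqrt_eq_rpow]
  · exact Continuous.aestronglyMeasurable (by fun_prop)
  · filter_upwards [ae_restrict_mem measurableSet_Ioi] with t ht x hx
    have ht : (0 : ℝ) < t := ht
    rw [← mul_assoc, norm_mul, norm_sqrt_mul_exp, norm_neg, Complex.norm_real,
      Real.norm_of_nonneg ht.le, mul_right_comm,
      show (3 / 2 : ℝ) = 1 / 2 + 1 by norm_num, Real.rpow_add_one ht.ne', ← Real.sqrt_eq_rpow]
    gcongr
    exact (hre x hx).le
  · exact integrableOn_rpow_mul_exp (by norm_num) (half_pos hw)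
  · refine .of_forall fun t x _ => HasDerivAt.const_mul _ ?_
    have h : HasDerivAt (fun x : ℂ => -(x * t)) (-(t : ℂ)) x := by
      exact (hasDerivAt_mul_const (t : ℂ)).fun_neg
    exact h.cexp

lemma Gamma_three_half : Complex.Gamma (3 / 2) = √Real.pi / 2 := by
  have h := Real.Gamma_add_one (s := 1 / 2) (by norm_num)
  rw [Real.Gamma_one_half_eq] at h
  have h2 : (3 / 2 : ℂ) = ((1 / 2 + 1 : ℝ) : ℂ) := by push_cast; norm_num
  rw [h2, Complex.Gamma_ofReal, h]
  push_cast; ring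

/-- The Laplace transform of `√t` on the right half-plane: the Gamma integral gives it for `w > 0`,
and both sides are analytic. -/
lemma laplace_sqrt {w : ℂ} (hw : 0 < w.re) :
    ∫ t in Ioi (0 : ℝ), (√t : ℂ) * cexp (-(w * t)) = √Real.pi / 2 * w ^ (-(3 : ℂ) / 2) := by
  have hopen : IsOpen {w : ℂ | 0 < w.re} := isOpen_lt continuous_const Complex.continuous_re
  have hF : AnalyticOnNhd ℂ
      (fun w : ℂ => ∫ t in Ioi (0 : ℝ), (√t : ℂ) * cexp (-(w * t))) {w : ℂ | 0 < w.re} :=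
    DifferentiableOn.analyticOnNhd
      (fun w hw => (differentiableAt_laplace hw).differentiableWithinAt) hopen
  have hH : AnalyticOnNhd ℂ
      (fun w : ℂ => (√Real.pi / 2 : ℂ) * w ^ (-(3 : ℂ) / 2)) {w : ℂ | 0 < w.re} := by
    refine DifferentiableOn.analyticOnNhd (fun w hw => ?_) hopen
    exact ((differentiableAt_id.cpow_const (Or.inl hw)).const_mul _).differentiableWithinAt
  have hreal : ∀ r : ℝ, 0 < r → ∫ t in Ioi (0 : ℝ), (√t : ℂ) * cexp (-((r : ℂ) * t)) =
      √Real.pi / 2 * (r : ℂ) ^ (-(3 : ℂ) / 2) := by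
    intro r hr
    have h := Complex.integral_cpow_mul_exp_neg_mul_Ioi (a := 3 / 2) (r := r) (by norm_num) hr
    rw [Gamma_three_half, one_div, Complex.inv_cpow _ _
      (by rw [Complex.arg_ofReal_of_nonneg hr.le]; exact Real.pi_pos.ne), ← Complex.cpow_neg,
      mul_comm, ← neg_div] at h
    rw [← h]
    refine setIntegral_congr_fun measurableSet_Ioi fun t ht => ?_
    have ht : (0 : ℝ) < t := ht
    rw [Real.sqrt_eq_rpow, Complex.ofReal_cpow ht.le]
    norm_num
  have hfreq : ∃ᶠ z in 𝓝[≠] (1 : ℂ),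
      ∫ t in Ioi (0 : ℝ), (√t : ℂ) * cexp (-(z * t)) = √Real.pi / 2 * z ^ (-(3 : ℂ) / 2) := by
    have ht : Tendsto (fun r : ℝ => (r : ℂ)) (𝓝[≠] 1) (𝓝[≠] 1) := by
      refine tendsto_nhdsWithin_iff.2 ⟨?_, ?_⟩
      · exact (Complex.continuous_ofReal.tendsto' 1 1 (by simp)).mono_left nhdsWithin_le_nhds
      · filter_upwards [self_mem_nhdsWithin] with r hr
        simpa using hr
    refine ht.frequently (Eventually.frequently ?_)
    filter_upwards [nhdsWithin_le_nhds (lt_mem_nhds (one_pos : (0 : ℝ) < 1))] with r hr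
    exact hreal r hr
  exact hF.eqOn_of_preconnected_of_frequently_eq hH (convex_halfSpace_re_gt 0).isPreconnected
    (by simp) hfreq hw

open FourierTransform in
/-- No indicator of `t > 0` is needed, since `√t = 0` for `t ≤ 0`. -/
lemma fourier_sqrt {w : ℂ} (hw : 0 < w.re) (x : ℝ) :
    𝓕 (fun t : ℝ => (√t : ℂ) * cexp (-(w * t))) x =
      √Real.pi / 2 * (2 * (Real.pi : ℂ) * I * x + w) ^ (-(3 : ℂ) / 2) := by
  rw [← laplace_sqrt (by simpa using hw), Real.fourier_real_eq_integral_exp_smul,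
    setIntegral_eq_integral_of_forall_compl_eq_zero]
  · refine integral_congr_ae (.of_forall fun t => ?_)
    simp only [smul_eq_mul]
    rw [mul_left_comm, ← Complex.exp_add]
    push_cast
    ring_nf
  · intro t ht
    rw [Real.sqrt_eq_zero_of_nonpos (by simpa using ht)]
    simp

/-! ### The Lipschitz formula -/

lemma norm_cpow_le_of_im {v : ℂ} {x : ℝ} (hx : x ≠ 0) (h : |x| ≤ |v.im|) :
    ‖v ^ (-(3 : ℂ) / 2)‖ ≤ |x| ^ (-(3 / 2 : ℝ)) := by
  have h2 : (-(3 : ℂ) / 2) = ((-(3 / 2) : ℝ) : ℂ) := by push_cast; ring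
  rw [h2, Complex.norm_cpow_real]
  exact Real.rpow_le_rpow_of_nonpos (abs_pos.2 hx) (h.trans (Complex.abs_im_le_norm v))
    (by norm_num)

open FourierTransform in
/-- The Lipschitz formula of exponent `3/2`, by Poisson summation. -/
lemma lipschitz_sqrt {w : ℂ} (hw : 0 < w.re) :
    ∑' n : ℕ, (√n : ℂ) * cexp (-(w * n)) =
      √Real.pi / 2 * ∑' n : ℤ, (2 * (Real.pi : ℂ) * I * n + w) ^ (-(3 : ℂ) / 2) := by
  set f : ℝ → ℂ := fun t => (√t : ℂ) * cexp (-(w * t)) with hf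
  have hcont : Continuous f := by fun_prop
  have hdecay : f =O[cocompact ℝ] fun x : ℝ => |x| ^ (-(3 / 2 : ℝ)) := by
    rw [cocompact_eq_atBot_atTop, isBigO_sup]
    constructor
    · refine (isBigO_zero (E' := ℂ) (fun x : ℝ => |x| ^ (-(3 / 2 : ℝ))) atBot).congr' ?_ .rfl
      filter_upwards [eventually_le_atBot 0] with t ht
      simp [hf, Real.sqrt_eq_zero_of_nonpos ht]
    · have h := (isBigO_refl (fun t : ℝ => t ^ (1 / 2 : ℝ)) atTop).mul
        (isLittleO_exp_neg_mul_rpow_atTop hw (-2)).isBigO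
      refine (IsBigO.of_norm_left (h.congr' ?_ ?_))
      · refine .of_forall fun t => ?_
        simp only [hf]
        rw [norm_sqrt_mul_exp, Real.sqrt_eq_rpow, neg_mul]
      · filter_upwards [eventually_gt_atTop 0] with t ht
        rw [← Real.rpow_add ht, abs_of_pos ht]
        norm_num
  have hFdecay : 𝓕 f =O[cocompact ℝ] fun x : ℝ => |x| ^ (-(3 / 2 : ℝ)) := by
    refine IsBigO.of_bound ‖(√Real.pi / 2 : ℂ)‖ ?_
    -- Once `|x| > |w.im|`, the imaginary part `2πx + w.im` has absolute value at least `|x|`.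
    filter_upwards [(tendsto_norm_cocompact_atTop (E := ℝ)).eventually_gt_atTop |w.im|] with x hx
    rw [Real.norm_eq_abs] at hx
    have hpos : 0 < |x| := (abs_nonneg _).trans_lt hx
    rw [hf, fourier_sqrt hw, norm_mul]
    gcongr
    rw [Real.norm_of_nonneg (by positivity)]
    refine norm_cpow_le_of_im (abs_pos.1 hpos) ?_
    have h2 : (2 * (Real.pi : ℂ) * I * x + w).im = 2 * Real.pi * x + w.im := by simp
    have h3 : |2 * Real.pi * x| = 2 * Real.pi * |x| := by
      rw [abs_mul, abs_of_pos Real.two_pi_pos]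
    have h4 := abs_sub_abs_le_abs_add (2 * Real.pi * x) w.im
    rw [h2]
    nlinarith [Real.pi_gt_three]
  have key := Real.tsum_eq_tsum_fourier_of_rpow_decay hcont (by norm_num) hdecay hFdecay 0
  have hsupp : Function.support (fun n : ℤ => f n) ⊆ range ((↑) : ℕ → ℤ) := by
    intro n hn
    rcases le_or_gt 0 n with h | h
    · exact ⟨n.toNat, Int.toNat_of_nonneg h⟩
    · refine absurd ?_ hn
      have h' : (n : ℝ) ≤ 0 := by exact_mod_cast h.le
      simp [hf, Real.sqrt_eq_zero_of_nonpos h']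
  have hnat := Nat.cast_injective.tsum_eq hsupp
  simp only [zero_add, hf, fourier_sqrt hw] at key
  simp only [hf] at hnat
  rw [← tsum_mul_left]
  refine Eq.trans ?_ (hnat.trans (key.trans ?_))
  · simp
  · simp

/-! ### Holomorphy of the periodic sum -/

/-- On the strip `|Im w| < 3π/2` one has `|2πn − Im w| ≥ 2π|n| − 3π/2 ≥ |n|` for `n ≠ 0`. -/
lemma abs_le_abs_im {w : ℂ} (hw : |w.im| < 3 * Real.pi / 2) {n : ℤ} (hn : n ≠ 0) :
    |(n : ℝ)| ≤ |(2 * (Real.pi : ℂ) * I * n - w).im| := by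
  have h1 : (1 : ℝ) ≤ |(n : ℝ)| := by exact_mod_cast Int.one_le_abs hn
  have h2 : (2 * (Real.pi : ℂ) * I * n - w).im = 2 * Real.pi * n - w.im := by simp
  have h3 : |2 * Real.pi * n| = 2 * Real.pi * |(n : ℝ)| := by
    rw [abs_mul, abs_of_pos Real.two_pi_pos]
  have h4 := abs_sub_abs_le_abs_sub (2 * Real.pi * n) w.im
  rw [h2]
  nlinarith [Real.pi_gt_three]

/-- The sum `Σ_{n∈ℤ} (2πin − w)^{−3/2}`, so that `G z = (√π/2) · latticeSum (log z)`. -/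
noncomputable def latticeSum (w : ℂ) : ℂ :=
  ∑' n : ℤ, (2 * (Real.pi : ℂ) * I * n - w) ^ (-(3 : ℂ) / 2)

lemma latticeSum_add_two_pi (w : ℂ) : latticeSum (w + 2 * Real.pi * I) = latticeSum w := by
  unfold latticeSum
  rw [← (Equiv.addRight (1 : ℤ)).tsum_eq]
  refine tsum_congr fun n => ?_
  congr 1
  simp
  ring

lemma differentiableAt_latticeSum {w : ℂ} (hw : |w.im| < 3 * Real.pi / 2)
    (hs : -w ∈ slitPlane) : DifferentiableAt ℂ latticeSum w := by
  set S : Set ℂ := {w | |w.im| < 3 * Real.pi / 2} with hS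
  have hopen : IsOpen S := isOpen_lt (by fun_prop) continuous_const
  have hsum : Summable fun n : ℤ => |(n : ℝ)| ^ (-(3 / 2 : ℝ)) :=
    Real.summable_abs_int_rpow (by norm_num)
  -- The term `n = 0` is not bounded on the strip, so it is split off.
  set F : ℤ → ℂ → ℂ := fun n w =>
    if n = 0 then 0 else (2 * (Real.pi : ℂ) * I * n - w) ^ (-(3 : ℂ) / 2) with hF
  have hbound : ∀ n, ∀ w ∈ S, ‖F n w‖ ≤ |(n : ℝ)| ^ (-(3 / 2 : ℝ)) := by
    intro n w hw
    by_cases hn : n = 0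
    · simp only [hF, if_pos hn, norm_zero]
      positivity
    · simp only [hF, if_neg hn]
      exact norm_cpow_le_of_im (by exact_mod_cast hn) (abs_le_abs_im hw hn)
  have hdiff : ∀ n, DifferentiableOn ℂ (F n) S := by
    intro n w hw
    by_cases hn : n = 0
    · simp only [hF, if_pos hn]
      exact differentiableWithinAt_const 0
    · simp only [hF, if_neg hn]
      refine DifferentiableAt.differentiableWithinAt (DifferentiableAt.cpow_const (by fun_prop) ?_)
      refine Or.inr fun h => hn ?_
      have h2 := abs_le_abs_im hw hn
      rw [h, abs_zero] at h2
      exact_mod_cast abs_nonpos_iff.1 h2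
  have htail := Complex.differentiableOn_tsum_of_summable_norm hsum hdiff hopen hbound
  have hsplit : ∀ v ∈ S, latticeSum v = (-v) ^ (-(3 : ℂ) / 2) + ∑' n : ℤ, F n v := by
    intro v hv
    have hFs : Summable fun n => F n v := .of_norm_bounded hsum fun n => hbound n v hv
    have hs : Summable fun n : ℤ => (2 * (Real.pi : ℂ) * I * n - v) ^ (-(3 : ℂ) / 2) := by
      refine hFs.congr_cofinite ?_
      filter_upwards [(Set.finite_singleton (0 : ℤ)).compl_mem_cofinite] with n hn
      exact if_neg hn
    rw [latticeSum, hs.tsum_eq_add_tsum_ite 0]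
    simp [hF]
  have hnhds : S ∈ 𝓝 w := hopen.mem_nhds hw
  have hzero : DifferentiableAt ℂ (fun v : ℂ => (-v) ^ (-(3 : ℂ) / 2)) w :=
    DifferentiableAt.cpow_const (by fun_prop) hs
  refine (hzero.fun_add (htail.differentiableAt hnhds)).congr_of_eventuallyEq ?_
  filter_upwards [hnhds] with v hv
  exact hsplit v hv

/-- On the left half-plane `log (-z) + πi` is a holomorphic branch of the logarithm; it differs from
`log z` by a period of `latticeSum`. -/
lemma latticeSum_log_neg {z : ℂ} (hz : z.re < 0) :
    latticeSum (log z) = latticeSum (log (-z) + Real.pi * I) := by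
  have hre : (log z).re = (log (-z)).re := by simp [Complex.log_re]
  rcases lt_or_ge z.im 0 with him | him
  · rw [← latticeSum_add_two_pi (log z)]
    congr 1
    apply Complex.ext
    · simp [hre]
    · simp [Complex.log_im, Complex.arg_neg_eq_arg_add_pi_of_im_neg him]
      ring
  · congr 1
    apply Complex.ext
    · simp [hre]
    · rcases him.eq_or_lt with h0 | h0
      · have h1 : z.arg = Real.pi := Complex.arg_eq_pi_iff.2 ⟨hz, h0.symm⟩
        have h2 : (-z).arg = 0 := Complex.arg_eq_zero_iff.2 ⟨by simpa using hz.le, by simp [← h0]⟩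
        simp [Complex.log_im, h1, h2]
      · simp [Complex.log_im, Complex.arg_neg_eq_arg_sub_pi_of_im_pos h0]

/-- `G` is holomorphic on `ℂ ∖ ([1,∞) ∪ {0})` and agrees with `Σ_{n≥1} √n zⁿ`
on the punctured unit disc, so it analytically continues the fractional
polylogarithm to `ℂ ∖ ([1,∞) ∪ {0})`. -/
theorem G_holomorphic_and_continues :
    DifferentiableOn ℂ G {z : ℂ | z ≠ 0 ∧ z ∉ Complex.ofReal '' Set.Ici (1 : ℝ)} ∧
    ∀ z : ℂ, 0 < ‖z‖ → ‖z‖ < 1 → G z = ∑' n : ℕ, (Real.sqrt n : ℂ) * z ^ n := by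
  constructor
  · rintro z ⟨hz0, hz1⟩
    refine DifferentiableAt.differentiableWithinAt (DifferentiableAt.const_mul ?_ _)
    change DifferentiableAt ℂ (fun z => latticeSum (log z)) z
    by_cases hz : z ∈ slitPlane
    · have him : |(log z).im| < 3 * Real.pi / 2 := by
        rw [Complex.log_im]
        linarith [Complex.abs_arg_le_pi z, Real.pi_pos]
      refine DifferentiableAt.comp z (differentiableAt_latticeSum him ?_)
        (Complex.differentiableAt_log hz)
      by_contra hs
      rw [Complex.mem_slitPlane_iff, not_or] at hs
      simp only [neg_re, neg_im, Complex.log_re, Complex.log_im, not_lt, ne_eq, not_not, neg_eq_zero,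
        Left.neg_pos_iff] at hs
      obtain ⟨hlog, harg⟩ := hs
      refine hz1 ⟨‖z‖, (Real.log_nonneg_iff (norm_pos_iff.2 hz0)).1 hlog, ?_⟩
      have := Complex.norm_mul_exp_arg_mul_I z
      simpa [harg] using this
    · have hre : z.re < 0 := by
        rw [Complex.mem_slitPlane_iff, not_or, not_lt, not_not] at hz
        refine lt_of_le_of_ne hz.1 fun h => hz0 (Complex.ext h hz.2)
      have him : z.im = 0 := by
        rw [Complex.mem_slitPlane_iff, not_or, not_not] at hz
        exact hz.2
      have hneg : (log (-z)).im = 0 := by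
        rw [Complex.log_im]
        exact Complex.arg_eq_zero_iff.2 ⟨by simpa using hre.le, by simp [him]⟩
      have hd : DifferentiableAt ℂ (fun z : ℂ => log (-z) + Real.pi * I) z := by
        refine DifferentiableAt.add_const _ (DifferentiableAt.clog (by fun_prop) ?_)
        exact Or.inl (by simpa using hre)
      have hH : DifferentiableAt ℂ latticeSum (log (-z) + Real.pi * I) := by
        refine differentiableAt_latticeSum ?_ (Or.inr ?_)
        · simp only [add_im, hneg, mul_im, ofReal_re, I_im, ofReal_im, I_re]
          rw [abs_of_pos] <;> simp <;> linarith [Real.pi_pos]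
        · simp [hneg, Real.pi_ne_zero]
      refine (DifferentiableAt.comp z hH hd).congr_of_eventuallyEq ?_
      filter_upwards [(isOpen_lt Complex.continuous_re continuous_const).mem_nhds hre] with v hv
      exact latticeSum_log_neg hv
  · intro z h0 h1
    have hz0 : z ≠ 0 := norm_pos_iff.1 h0
    have hw : 0 < (-log z).re := by
      rw [neg_re, Complex.log_re]
      linarith [Real.log_neg h0 h1]
    have h := lipschitz_sqrt hw
    simp only [← sub_eq_add_neg] at h
    rw [G, ← h]
    refine tsum_congr fun n => ?_
    rw [neg_mul, neg_neg, mul_comm (log z), Complex.exp_nat_mul, Complex.exp_log hz0]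
end

section
/- For every complex number z with 0 < |z| < 1 and |Log z| < 2π, one has G(z) = (√π/2)·(−Log z)^{−3/2} + Σ_{n≥0} ζ(−n − 1/2) · (Log z)^n / n!, where the series on the right converges and ζ is the Riemann zeta function. -/
open Complex

/-- The binomial coefficients of `(1 - u)^{-3/2}`, written through the Gamma function. -/
noncomputable def binomCoeff (k : ℕ) : ℂ :=
  Gamma (k + 3 / 2) / (k.factorial * Gamma (3 / 2))

lemma multichoose_three_halves (k : ℕ) :
    Ring.choose ((3 / 2 : ℂ) + k - 1) k = binomCoeff k := by
  have hG : Gamma (3 / 2 : ℂ) ≠ 0 := Gamma_ne_zero_of_re_pos (by norm_num)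
  have hk : (k.factorial : ℂ) ≠ 0 := by exact_mod_cast k.factorial_ne_zero
  have h1 := Ring.factorial_nsmul_multichoose_eq_ascPochhammer (3 / 2 : ℂ) k
  have h2 : Gamma ((3 / 2 : ℂ) + k) = (ascPochhammer ℂ k).eval (3 / 2) * Gamma (3 / 2) := by
    induction k with
    | zero => simp
    | succ k ih =>
      have hk' : (k.factorial : ℂ) ≠ 0 := by exact_mod_cast k.factorial_ne_zero
      have hne : (3 / 2 : ℂ) + k ≠ 0 := by
        intro h
        have := congrArg re h
        simp at this
        have : (0 : ℝ) ≤ k := k.cast_nonneg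
        norm_num at *
        linarith
      rw [Nat.cast_succ, ← add_assoc, Gamma_add_one _ hne,
        ih hk' (Ring.factorial_nsmul_multichoose_eq_ascPochhammer _ _), ascPochhammer_succ_eval]
      ring
  rw [← Ring.multichoose_eq, binomCoeff, eq_div_iff (mul_ne_zero hk hG), add_comm (k : ℂ), h2,
    ← mul_assoc, mul_comm _ (k.factorial : ℂ), ← nsmul_eq_mul, h1,
    Polynomial.ascPochhammer_smeval_eq_eval]

lemma hasSum_binomCoeff {u : ℂ} (hu : ‖u‖ < 1) :
    HasSum (fun k => binomCoeff k * u ^ k) ((1 - u) ^ (-(3 : ℂ) / 2)) := by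
  have h := (one_div_one_sub_cpow_hasFPowerSeriesOnBall_zero (3 / 2)).hasSum (y := u)
    (by simpa [enorm_eq_nnnorm] using! hu)
  simp only [multichoose_three_halves] at h
  rw [neg_div, cpow_neg]
  simpa [FormalMultilinearSeries.ofScalars] using h

lemma summable_norm_binomCoeff {r : ℝ} (h0 : 0 ≤ r) (h1 : r < 1) :
    Summable (fun k => ‖binomCoeff k‖ * r ^ k) := by
  have := (hasSum_binomCoeff (u := (r : ℂ)) (by simpa [abs_of_nonneg h0] using h1)).summable.norm
  simpa [abs_of_nonneg h0] using this

/-- Factoring `(tc - w)^{-3/2}` for `c = ± i`: the argument of `c` is `± π/2` and `1 - w/(tc)` lies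
in the right half-plane, so the principal arguments add up inside `(-π, π)`. -/
lemma cpow_factor {c w : ℂ} (hc : c = I ∨ c = -I) {t : ℝ} (ht : 0 < t) (hw : ‖w‖ < t) :
    (t * c - w) ^ (-(3 : ℂ) / 2) =
      (t : ℂ) ^ (-(3 : ℂ) / 2) * c ^ (-(3 : ℂ) / 2) * (1 - w / (t * c)) ^ (-(3 : ℂ) / 2) := by
  have hc0 : c ≠ 0 := by rcases hc with rfl | rfl <;> simp
  have hcn : ‖c‖ = 1 := by rcases hc with rfl | rfl <;> simp
  have htc : (t : ℂ) ≠ 0 := by exact_mod_cast ht.ne'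
  set v := 1 - w / (t * c) with hv
  have hu : ‖w / (t * c)‖ < 1 := by
    rw [norm_div, norm_mul, hcn, mul_one, norm_real, Real.norm_of_nonneg ht.le]
    exact (div_lt_one ht).2 hw
  have hre : 0 < v.re := by
    have := (re_le_norm (w / (t * c))).trans_lt hu
    simp only [hv, sub_re, one_re]
    linarith
  have hv0 : v ≠ 0 := by
    intro h
    simp [h] at hre
  have harg := abs_lt.1 (abs_arg_lt_pi_div_two_iff.2 (Or.inl hre))
  have hcv : log (c * v) = log c + log v := by
    apply log_mul hc0 hv0
    rcases hc with rfl | rfl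
    · rw [arg_I]; constructor <;> linarith [Real.pi_pos]
    · rw [arg_neg_I]; constructor <;> linarith [Real.pi_pos]
  have heq : t * c - w = t * (c * v) := by
    rw [hv]; field_simp
  rw [heq, cpow_def_of_ne_zero (mul_ne_zero htc (mul_ne_zero hc0 hv0)),
    log_ofReal_mul ht (mul_ne_zero hc0 hv0), hcv, cpow_def_of_ne_zero htc,
    cpow_def_of_ne_zero hc0, cpow_def_of_ne_zero hv0, ← exp_add, ← exp_add, ofReal_log ht.le]
  ring_nf

/-- The expansion of one half-line of the lattice sum: `c = i` gives the indices `n ≥ 1` and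
`c = -i` the indices `n ≤ -1`. Both sides are iterated sums of one absolutely convergent double
series. -/
lemma half_sum {c w : ℂ} (hc : c = I ∨ c = -I) (hw : ‖w‖ < 2 * Real.pi) :
    ∃ S : ℂ, HasSum (fun n : ℕ => (((2 * Real.pi * (n + 1) : ℝ) : ℂ) * c - w) ^ (-(3 : ℂ) / 2)) S ∧
      HasSum (fun k : ℕ => binomCoeff k * w ^ k * c ^ (-((k : ℂ) + 3 / 2)) *
        (2 * Real.pi : ℂ) ^ (-((k : ℂ) + 3 / 2)) * riemannZeta (k + 3 / 2)) S := by
  have hc0 : c ≠ 0 := by rcases hc with rfl | rfl <;> simp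
  have hcn : ‖c‖ = 1 := by rcases hc with rfl | rfl <;> simp
  have hpi := Real.pi_pos
  have hpi2 : (0 : ℝ) < 2 * Real.pi := by positivity
  have hpc : (2 * Real.pi : ℂ) ≠ 0 := by exact_mod_cast hpi2.ne'
  set D : ℂ := (2 * Real.pi : ℂ) ^ (-(3 : ℂ) / 2) * c ^ (-(3 : ℂ) / 2) with hD
  set r : ℝ := ‖w‖ / (2 * Real.pi) with hr
  have hr0 : 0 ≤ r := by positivity
  have hr1 : r < 1 := (div_lt_one hpi2).2 hw
  let F : ℕ × ℕ → ℂ := fun p => D * ((p.2 : ℂ) + 1) ^ (-(3 : ℂ) / 2) *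
    (binomCoeff p.1 * (w / (((2 * Real.pi * (p.2 + 1) : ℝ) : ℂ) * c)) ^ p.1)
  have hn0 (n : ℕ) : (n : ℂ) + 1 ≠ 0 := by exact_mod_cast n.succ_ne_zero
  have hz : Summable (fun n : ℕ => ‖((n : ℂ) + 1) ^ (-(3 : ℂ) / 2)‖) := by
    have h := (Complex.summable_one_div_nat_cpow (p := 3 / 2)).2 (by norm_num)
    have h2 := ((summable_nat_add_iff 1).2 h).norm
    refine h2.congr fun n => ?_
    rw [neg_div, cpow_neg]
    simp
  have hu (n : ℕ) : ‖w / (((2 * Real.pi * (n + 1) : ℝ) : ℂ) * c)‖ ≤ r := by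
    have hn : (0 : ℝ) ≤ n := n.cast_nonneg
    rw [norm_div, norm_mul, hcn, mul_one, norm_real, Real.norm_of_nonneg (by positivity), hr]
    apply div_le_div_of_nonneg_left (norm_nonneg _) hpi2
    nlinarith
  have hF : Summable F := by
    have hprod := ((summable_norm_binomCoeff hr0 hr1).mul_of_nonneg (hz.mul_left ‖D‖)
      (fun k => by positivity) (fun n => by positivity))
    refine Summable.of_norm_bounded hprod fun p => ?_
    simp only [F, norm_mul, norm_pow]
    have := pow_le_pow_left₀ (norm_nonneg _) (hu p.2) p.1
    calc _ ≤ ‖D‖ * ‖((p.2 : ℂ) + 1) ^ (-(3 : ℂ) / 2)‖ * (‖binomCoeff p.1‖ * r ^ p.1) := by gcongr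
      _ = _ := by ring
  refine ⟨∑' p, F p, ?_, ?_⟩
  · have hs : HasSum (F ∘ Prod.swap) (∑' p, F p) :=
      (Equiv.prodComm ℕ ℕ).hasSum_iff.2 hF.hasSum
    refine hs.prod_fiberwise fun n => ?_
    have hn : (0 : ℝ) ≤ n := n.cast_nonneg
    have ht : (0 : ℝ) < 2 * Real.pi * (n + 1) := by positivity
    rw [cpow_factor hc ht (by nlinarith)]
    have hpow : ((2 * Real.pi * (n + 1) : ℝ) : ℂ) ^ (-(3 : ℂ) / 2) =
        (2 * Real.pi : ℂ) ^ (-(3 : ℂ) / 2) * ((n : ℂ) + 1) ^ (-(3 : ℂ) / 2) := by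
      rw [ofReal_mul, mul_cpow_ofReal_nonneg hpi2.le (by positivity)]
      push_cast; rfl
    rw [hpow]
    convert! (hasSum_binomCoeff ((hu n).trans_lt hr1)).mul_left (D * ((n : ℂ) + 1) ^ (-(3 : ℂ) / 2))
      using 1
    rw [hD]; ring
  · refine hF.hasSum.prod_fiberwise fun k => ?_
    have hre : 1 < ((k : ℂ) + 3 / 2).re := by
      have : (0 : ℝ) ≤ k := k.cast_nonneg
      have h : ((k : ℂ) + 3 / 2).re = k + 3 / 2 := by simp
      rw [h]; linarith
    have hzs : HasSum (fun n : ℕ => 1 / ((n : ℂ) + 1) ^ ((k : ℂ) + 3 / 2))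
        (riemannZeta (k + 3 / 2)) := by
      rw [zeta_eq_tsum_one_div_nat_add_one_cpow hre]
      apply Summable.hasSum
      have h := (summable_nat_add_iff 1).2 (Complex.summable_one_div_nat_cpow.2 hre)
      simpa using h
    convert! hzs.mul_left (binomCoeff k * w ^ k * c ^ (-((k : ℂ) + 3 / 2)) *
        (2 * Real.pi : ℂ) ^ (-((k : ℂ) + 3 / 2))) using 1
    funext n
    have split {x : ℂ} (hx : x ≠ 0) :
        x ^ (-((k : ℂ) + 3 / 2)) = x ^ (-(3 : ℂ) / 2) / x ^ k := by
      rw [show -((k : ℂ) + 3 / 2) = -(3 : ℂ) / 2 - k by ring, cpow_sub _ _ hx, cpow_natCast]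
    rw [one_div, ← cpow_neg, split hc0, split hpc, split (hn0 n)]
    simp only [F, hD]
    push_cast
    rw [div_pow, mul_pow, mul_pow]
    have h1 := hn0 n
    field_simp

/-- The functional equation at `s = k + 3/2`, with `2 cos(πs/2)` written as `i^{-s} + (-i)^{-s}`. -/
lemma zeta_coeff (k : ℕ) (w : ℂ) :
    (Real.sqrt Real.pi / 2 : ℂ) *
      (binomCoeff k * w ^ k * I ^ (-((k : ℂ) + 3 / 2)) *
        (2 * Real.pi : ℂ) ^ (-((k : ℂ) + 3 / 2)) * riemannZeta (k + 3 / 2) +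
       binomCoeff k * w ^ k * (-I) ^ (-((k : ℂ) + 3 / 2)) *
        (2 * Real.pi : ℂ) ^ (-((k : ℂ) + 3 / 2)) * riemannZeta (k + 3 / 2)) =
    riemannZeta (-(k : ℂ) - 1 / 2) * w ^ k / (k.factorial : ℂ) := by
  have hk0 : (0 : ℝ) ≤ k := k.cast_nonneg
  have hre : ((k : ℂ) + 3 / 2).re = k + 3 / 2 := by simp
  have hfe := riemannZeta_one_sub (s := (k : ℂ) + 3 / 2)
    (by
      intro n h
      have := congrArg re h
      rw [hre] at this
      have hn : (0 : ℝ) ≤ n := n.cast_nonneg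
      simp at this
      linarith)
    (by
      intro h
      have := congrArg re h
      rw [hre, one_re] at this
      linarith)
  have hG : Gamma (3 / 2 : ℂ) = (Real.sqrt Real.pi / 2 : ℂ) := by
    rw [show (3 / 2 : ℂ) = 1 / 2 + 1 by norm_num, Gamma_add_one _ (by norm_num),
      show (1 / 2 : ℂ) = ((1 / 2 : ℝ) : ℂ) by norm_num, Gamma_ofReal, Real.Gamma_one_half_eq]
    push_cast; ring
  have hG0 : Gamma (3 / 2 : ℂ) ≠ 0 := Gamma_ne_zero_of_re_pos (by norm_num)
  have hfac : (k.factorial : ℂ) ≠ 0 := by exact_mod_cast k.factorial_ne_zero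
  have hcos : I ^ (-((k : ℂ) + 3 / 2)) + (-I) ^ (-((k : ℂ) + 3 / 2)) =
      2 * cos (Real.pi * ((k : ℂ) + 3 / 2) / 2) := by
    rw [cpow_def_of_ne_zero I_ne_zero, cpow_def_of_ne_zero (neg_ne_zero.2 I_ne_zero), log_I,
      log_neg_I, two_cos, add_comm]
    ring_nf
  rw [show -(k : ℂ) - 1 / 2 = 1 - (k + 3 / 2) by ring, hfe, ← hG, binomCoeff]
  calc _ = Gamma (3 / 2) * (Gamma (k + 3 / 2) / (k.factorial * Gamma (3 / 2))) * w ^ k *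
        (2 * Real.pi : ℂ) ^ (-((k : ℂ) + 3 / 2)) * riemannZeta (k + 3 / 2) *
        (I ^ (-((k : ℂ) + 3 / 2)) + (-I) ^ (-((k : ℂ) + 3 / 2))) := by ring
    _ = _ := by rw [hcos]; field_simp

/-- For `0 < |z| < 1` with `|Log z| < 2π`, the series
`Σ_{n≥0} ζ(−n−1/2) (Log z)ⁿ/n!` converges and
`G(z) = (√π/2)(−Log z)^{−3/2} + Σ_{n≥0} ζ(−n−1/2) (Log z)ⁿ/n!`. -/
theorem G_zeta_expansion (z : ℂ) (h0 : 0 < ‖z‖) (h1 : ‖z‖ < 1)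
    (hlog : ‖Complex.log z‖ < 2 * Real.pi) :
    HasSum (fun n : ℕ =>
        riemannZeta (-(n : ℂ) - 1 / 2) * (Complex.log z) ^ n / (n.factorial : ℂ))
      (G z - (Real.sqrt Real.pi / 2) * (-Complex.log z) ^ (-(3 : ℂ) / 2)) := by
  obtain ⟨A, hA1, hA2⟩ := half_sum (c := I) (Or.inl rfl) hlog
  obtain ⟨B, hB1, hB2⟩ := half_sum (c := -I) (Or.inr rfl) hlog
  have hG : G z = (Real.sqrt Real.pi / 2) * (A + (-log z) ^ (-(3 : ℂ) / 2) + B) := by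
    rw [G]
    congr 1
    refine HasSum.tsum_eq ?_
    have h := HasSum.of_add_one_of_neg_add_one
      (f := fun n : ℤ => (2 * (Real.pi : ℂ) * I * (n : ℂ) - log z) ^ (-(3 : ℂ) / 2))
      (m := A) (m' := B) ?_ ?_
    · simpa using h
    · convert! hA1 using 3
      push_cast; ring
    · convert! hB1 using 3
      push_cast; ring
  have hsum := (hA2.add hB2).mul_left (Real.sqrt Real.pi / 2 : ℂ)
  simp only [zeta_coeff] at hsum
  convert! hsum using 1
  rw [hG]; ring
end

section
/- For every complex number z with |z| ≥ 1, Im z ≥ 0 and z ∉ [1,∞), one has the inversion formula G(z) = i·G(1/z) + ((i − 1)/(4π)) · Σ_{n≥0} (n + Log z/(2πi))^{−3/2}, where the series over n ≥ 0 converges absolutely. -/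
lemma exp_three_pi_div_two : Complex.exp ((3 / 2 : ℂ) * (Real.pi * Complex.I)) = -Complex.I := by
  rw [show (3 / 2 : ℂ) * (Real.pi * Complex.I)
      = Real.pi * Complex.I + Real.pi / 2 * Complex.I by ring, Complex.exp_add,
    Complex.exp_pi_mul_I, Complex.exp_pi_div_two_mul_I]
  ring

lemma exp_neg_three_pi_div_two :
    Complex.exp (-((3 / 2 : ℂ) * (Real.pi * Complex.I))) = Complex.I := by
  rw [Complex.exp_neg, exp_three_pi_div_two, inv_neg, Complex.inv_I, neg_neg]

lemma neg_cpow_of_im_pos {v : ℂ} (hv : 0 < v.im) :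
    (-v) ^ (-(3 : ℂ) / 2) = -Complex.I * v ^ (-(3 : ℂ) / 2) := by
  have h0 : v ≠ 0 := by rintro rfl; simp at hv
  have hlog : Complex.log (-v) = Complex.log v - Real.pi * Complex.I := by
    simp only [Complex.log, norm_neg, Complex.arg_neg_eq_arg_sub_pi_of_im_pos hv]
    push_cast
    ring
  rw [Complex.cpow_def_of_ne_zero (neg_ne_zero.2 h0), Complex.cpow_def_of_ne_zero h0, hlog,
    ← exp_three_pi_div_two, ← Complex.exp_add]
  congr 1
  ring

lemma neg_cpow_of_im_neg {v : ℂ} (hv : v.im < 0) :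
    (-v) ^ (-(3 : ℂ) / 2) = Complex.I * v ^ (-(3 : ℂ) / 2) := by
  have h0 : v ≠ 0 := by rintro rfl; simp at hv
  have hlog : Complex.log (-v) = Complex.log v + Real.pi * Complex.I := by
    simp only [Complex.log, norm_neg, Complex.arg_neg_eq_arg_add_pi_of_im_neg hv]
    push_cast
    ring
  rw [Complex.cpow_def_of_ne_zero (neg_ne_zero.2 h0), Complex.cpow_def_of_ne_zero h0, hlog]
  nth_rw 2 [← exp_neg_three_pi_div_two]
  rw [← Complex.exp_add]
  congr 1
  ring

lemma exp_three_pi_div_four :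
    Complex.exp ((3 / 4 : ℂ) * (Real.pi * Complex.I)) = (Complex.I - 1) / (Real.sqrt 2 : ℝ) := by
  have h2 : ((Real.sqrt 2 : ℝ) : ℂ) * (Real.sqrt 2 : ℝ) = 2 := by
    rw [← Complex.ofReal_mul, Real.mul_self_sqrt (by norm_num)]; norm_num
  have h0 : ((Real.sqrt 2 : ℝ) : ℂ) ≠ 0 := by
    simp
  rw [show (3 / 4 : ℂ) * (Real.pi * Complex.I)
      = Real.pi / 2 * Complex.I + ((Real.pi / 4 : ℝ) : ℂ) * Complex.I by push_cast; ring,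
    Complex.exp_add, Complex.exp_pi_div_two_mul_I, Complex.exp_mul_I, ← Complex.ofReal_cos,
    ← Complex.ofReal_sin, Real.cos_pi_div_four, Real.sin_pi_div_four]
  push_cast
  field_simp
  linear_combination (Complex.I + Complex.I ^ 2) * h2 + 2 * Complex.I_sq

lemma sqrt_pi_mul_rpow :
    Real.sqrt Real.pi * (2 * Real.pi) ^ (-(3 : ℝ) / 2) = 1 / (2 * Real.pi * Real.sqrt 2) := by
  have hp := Real.pi_pos
  have h2p : 0 < 2 * Real.pi := by positivity
  have : (2 * Real.pi) ^ (-(3 : ℝ) / 2) = (2 * Real.pi)⁻¹ * (Real.sqrt (2 * Real.pi))⁻¹ := by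
    rw [Real.sqrt_eq_rpow, ← Real.rpow_neg h2p.le, ← Real.rpow_neg_one, ← Real.rpow_add h2p]
    norm_num
  rw [this, Real.sqrt_mul (by norm_num)]
  have := Real.sqrt_pos.2 hp
  field_simp

/-- The positive real part keeps `arg (-i u) = arg u - π/2` inside the principal range, so the power
of the product `-2πi u` factors. -/
lemma sqrt_pi_mul_cpow {u : ℂ} (hu : 0 < u.re) :
    (Real.sqrt Real.pi : ℂ) * (-(2 * (Real.pi : ℂ) * Complex.I * u)) ^ (-(3 : ℂ) / 2)
      = (Complex.I - 1) / (4 * (Real.pi : ℂ)) * u ^ (-(3 : ℂ) / 2) := by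
  have h0 : u ≠ 0 := by rintro rfl; simp at hu
  have hI : -Complex.I ≠ 0 := neg_ne_zero.2 Complex.I_ne_zero
  have hp := Real.pi_pos
  have h2p : 0 < 2 * Real.pi := by positivity
  have harg := abs_lt.1 (Complex.abs_arg_lt_pi_div_two_iff.2 (Or.inl hu))
  have hlog : Complex.log (-(2 * (Real.pi : ℂ) * Complex.I * u))
      = (Real.log (2 * Real.pi) : ℝ) + (-(Real.pi / 2) * Complex.I + Complex.log u) := by
    rw [show -(2 * (Real.pi : ℂ) * Complex.I * u)
        = ((2 * Real.pi : ℝ) : ℂ) * (-Complex.I * u) by push_cast; ring,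
      Complex.log_ofReal_mul h2p (mul_ne_zero hI h0), Complex.log_mul hI h0, Complex.log_neg_I]
    rw [Complex.arg_neg_I]
    constructor <;> linarith [harg.1, harg.2]
  have hne : -(2 * (Real.pi : ℂ) * Complex.I * u) ≠ 0 := by
    simp [h0, hp.ne']
  have hr : Complex.exp ((Real.log (2 * Real.pi) : ℝ) * (-(3 : ℂ) / 2))
      = (((2 * Real.pi) ^ (-(3 : ℝ) / 2) : ℝ) : ℂ) := by
    rw [Real.rpow_def_of_pos h2p]
    push_cast
    rfl
  have hc := congrArg (Complex.ofReal) sqrt_pi_mul_rpow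
  rw [Complex.ofReal_mul] at hc
  rw [Complex.cpow_def_of_ne_zero hne, Complex.cpow_def_of_ne_zero h0, hlog, add_mul, add_mul,
    Complex.exp_add, Complex.exp_add, hr,
    show -(Real.pi / 2 : ℂ) * Complex.I * (-(3 : ℂ) / 2)
      = (3 / 4 : ℂ) * (Real.pi * Complex.I) by ring, exp_three_pi_div_four, ← mul_assoc, hc]
  have h2 : ((Real.sqrt 2 : ℝ) : ℂ) * (Real.sqrt 2 : ℝ) = 2 := by
    rw [← Complex.ofReal_mul, Real.mul_self_sqrt (by norm_num)]; norm_num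
  have hs : ((Real.sqrt 2 : ℝ) : ℂ) ≠ 0 := by simp
  have hpc : (Real.pi : ℂ) ≠ 0 := by exact_mod_cast hp.ne'
  rw [← mul_assoc]
  congr 1
  push_cast
  field_simp
  linear_combination -2 * (Complex.I - 1) * h2

lemma summable_norm_cpow {v : ℕ → ℂ} (hv : ∀ n : ℕ, (n : ℝ) + 1 ≤ ‖v (n + 1)‖) :
    Summable (fun n : ℕ => ‖v n ^ (-(3 : ℂ) / 2)‖) := by
  rw [← summable_nat_add_iff 1]
  have hs : Summable (fun n : ℕ => ((n + 1 : ℕ) : ℝ) ^ (-(3 : ℝ) / 2)) :=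
    (summable_nat_add_iff 1).2 (Real.summable_nat_rpow.2 (by norm_num))
  refine Summable.of_nonneg_of_le (fun _ => norm_nonneg _) (fun n => ?_) hs
  have hre : (-(3 : ℂ) / 2) = ((-(3 : ℝ) / 2 : ℝ) : ℂ) := by push_cast; rfl
  refine (Complex.norm_cpow_le _ _).trans ?_
  rw [hre, Complex.ofReal_re, Complex.ofReal_im, mul_zero, Real.exp_zero, div_one]
  refine Real.rpow_le_rpow_of_nonpos (by positivity) ?_ (by norm_num)
  push_cast
  exact hv n

/-- When `z` is a negative real, `Log (1/z) = -Log z + 2πi`, which only shifts the summation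
index. -/
lemma tsum_log_inv (z : ℂ) :
    ∑' n : ℤ, (2 * (Real.pi : ℂ) * Complex.I * (n : ℂ) - Complex.log (1 / z)) ^ (-(3 : ℂ) / 2)
      = ∑' n : ℤ, (2 * (Real.pi : ℂ) * Complex.I * (n : ℂ) + Complex.log z) ^ (-(3 : ℂ) / 2) := by
  rw [one_div]
  by_cases h : z.arg = Real.pi
  · rw [← (Equiv.addRight (1 : ℤ)).tsum_eq]
    have hlog : Complex.log z⁻¹ = -Complex.log z + 2 * Real.pi * Complex.I := by
      rw [Complex.log_inv_eq_ite, if_pos h]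
      apply Complex.ext <;> simp [Complex.log_im, h]
      ring
    refine tsum_congr fun n => ?_
    congr 1
    rw [hlog, Equiv.coe_addRight]
    push_cast
    ring
  · rw [Complex.log_inv z h]
    simp only [sub_neg_eq_add]

lemma arg_pos_of_not_mem {z : ℂ} (h1 : 1 ≤ ‖z‖) (h2 : 0 ≤ z.im)
    (h3 : z ∉ Complex.ofReal '' Set.Ici (1 : ℝ)) : 0 < z.arg := by
  refine lt_of_le_of_ne (Complex.arg_nonneg_iff.2 h2) fun h => h3 ⟨‖z‖, h1, ?_⟩
  have := Complex.norm_mul_exp_arg_mul_I z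
  rwa [← h, Complex.ofReal_zero, zero_mul, Complex.exp_zero, mul_one] at this

/-- Inversion formula: for `|z| ≥ 1`, `Im z ≥ 0`, `z ∉ [1,∞)`, the series
`Σ_{n≥0} (n + Log z/(2πi))^{−3/2}` converges absolutely and
`G(z) = i G(1/z) + ((i−1)/(4π)) Σ_{n≥0} (n + Log z/(2πi))^{−3/2}`. -/
theorem G_inversion (z : ℂ) (h1 : 1 ≤ ‖z‖) (h2 : 0 ≤ z.im)
    (h3 : z ∉ Complex.ofReal '' Set.Ici (1 : ℝ)) :
    Summable (fun n : ℕ =>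
      ‖((n : ℂ) + Complex.log z / (2 * (Real.pi : ℂ) * Complex.I)) ^ (-(3 : ℂ) / 2)‖) ∧
    G z = Complex.I * G (1 / z) +
      ((Complex.I - 1) / (4 * (Real.pi : ℂ))) *
        ∑' n : ℕ, ((n : ℂ) + Complex.log z / (2 * (Real.pi : ℂ) * Complex.I)) ^ (-(3 : ℂ) / 2) := by
  have hp := Real.pi_pos
  have hpc : (Real.pi : ℂ) ≠ 0 := by exact_mod_cast hp.ne'
  have harg := arg_pos_of_not_mem h1 h2 h3
  have harg' := Complex.arg_le_pi z
  set L := Complex.log z with hL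
  have hLim : L.im = z.arg := Complex.log_im z
  set u : ℕ → ℂ := fun n => (n : ℂ) + L / (2 * (Real.pi : ℂ) * Complex.I) with hu
  set v : ℤ → ℂ := fun n => 2 * (Real.pi : ℂ) * Complex.I * (n : ℂ) + L with hv
  have hvim (n : ℤ) : (v n).im = 2 * Real.pi * n + z.arg := by
    simp [hv, hLim]
  have hvu (n : ℕ) : v n = 2 * (Real.pi : ℂ) * Complex.I * u n := by
    simp only [hv, hu]
    have := Complex.I_ne_zero
    push_cast
    field_simp
  have hure (n : ℕ) : (u n).re = n + z.arg / (2 * Real.pi) := by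
    have h := congrArg Complex.im (hvu n)
    rw [hvim] at h
    simp at h
    field_simp
    linarith
  have hupos (n : ℕ) : 0 < (u n).re := by
    rw [hure]
    positivity
  have hsum : Summable (fun n : ℕ => ‖u n ^ (-(3 : ℂ) / 2)‖) := by
    refine summable_norm_cpow fun n => le_trans ?_ (Complex.re_le_norm _)
    rw [hure]
    push_cast
    have : 0 ≤ z.arg / (2 * Real.pi) := by positivity
    linarith
  refine ⟨hsum, ?_⟩
  have hsq : (Real.sqrt Real.pi : ℂ) ≠ 0 := by
    exact_mod_cast (Real.sqrt_pos.2 hp).ne'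
  have hterm (n : ℕ) := sqrt_pi_mul_cpow (hupos n)
  simp only [← hvu] at hterm
  have hA : Summable (fun n : ℕ => (-v n) ^ (-(3 : ℂ) / 2)) := by
    rw [← summable_mul_left_iff hsq]
    simp only [hterm]
    exact hsum.of_norm.mul_left _
  have hB : Summable (fun n : ℕ => (-v (-((n : ℤ) + 1))) ^ (-(3 : ℂ) / 2)) := by
    refine (summable_norm_cpow (v := fun n : ℕ => -v (-((n : ℤ) + 1))) fun n =>
      le_trans ?_ ((le_abs_self _).trans (Complex.abs_im_le_norm _))).of_norm
    rw [Complex.neg_im, hvim]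
    push_cast
    have hn : (0 : ℝ) ≤ n := n.cast_nonneg
    nlinarith [Real.pi_gt_three]
  have hposA (n : ℕ) : v n ^ (-(3 : ℂ) / 2) = Complex.I * (-v n) ^ (-(3 : ℂ) / 2) := by
    rw [neg_cpow_of_im_pos, ← mul_assoc, mul_neg, Complex.I_mul_I, neg_neg, one_mul]
    rw [hvim]
    push_cast
    positivity
  have hnegB (n : ℕ) : v (-((n : ℤ) + 1)) ^ (-(3 : ℂ) / 2)
      = -Complex.I * (-v (-((n : ℤ) + 1))) ^ (-(3 : ℂ) / 2) := by
    rw [neg_cpow_of_im_neg, ← mul_assoc, neg_mul, Complex.I_mul_I, neg_neg, one_mul]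
    rw [hvim]
    push_cast
    have hn : (0 : ℝ) ≤ n := n.cast_nonneg
    nlinarith
  have hGz : ∑' n : ℤ, (2 * (Real.pi : ℂ) * Complex.I * (n : ℂ) - L) ^ (-(3 : ℂ) / 2)
      = ∑' n : ℕ, (-v n) ^ (-(3 : ℂ) / 2)
        + ∑' n : ℕ, (-v (-((n : ℤ) + 1))) ^ (-(3 : ℂ) / 2) := by
    rw [← tsum_of_nat_of_neg_add_one (f := fun n : ℤ => (-v n) ^ (-(3 : ℂ) / 2)) hA hB,
      ← (Equiv.neg ℤ).tsum_eq]
    refine tsum_congr fun n => ?_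
    congr 1
    simp only [hv, Equiv.neg_apply]
    push_cast
    ring
  have hGi : ∑' n : ℤ, v n ^ (-(3 : ℂ) / 2)
      = Complex.I * ∑' n : ℕ, (-v n) ^ (-(3 : ℂ) / 2)
        + -Complex.I * ∑' n : ℕ, (-v (-((n : ℤ) + 1))) ^ (-(3 : ℂ) / 2) := by
    rw [← tsum_mul_left, ← tsum_mul_left,
      tsum_of_nat_of_neg_add_one (f := fun n : ℤ => v n ^ (-(3 : ℂ) / 2))
        (by simpa only [hposA] using hA.mul_left _) (by simpa only [hnegB] using hB.mul_left _)]
    simp only [hposA, hnegB]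
  have hfin : (Real.sqrt Real.pi : ℂ) * ∑' n : ℕ, (-v n) ^ (-(3 : ℂ) / 2)
      = (Complex.I - 1) / (4 * (Real.pi : ℂ)) * ∑' n : ℕ, u n ^ (-(3 : ℂ) / 2) := by
    rw [← tsum_mul_left, ← tsum_mul_left]
    exact tsum_congr hterm
  rw [← hfin]
  unfold G
  rw [tsum_log_inv, ← hL, hGz, hGi]
  linear_combination (-(Real.sqrt Real.pi / 2 : ℂ)) * (∑' n : ℕ, (-v n) ^ (-(3 : ℂ) / 2)
    - ∑' n : ℕ, (-v (-((n : ℤ) + 1))) ^ (-(3 : ℂ) / 2)) * Complex.I_mul_I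
end

section
/- G(−1) = (1 − 2√2) · ζ(3/2) / (4π); equivalently, (√π/2) · Σ_{n∈ℤ} (2πin − iπ)^{−3/2} = (1 − 2√2) ζ(3/2)/(4π). -/
lemma pos_mul_cpow {r : ℝ} (hr : 0 < r) {x : ℂ} (hx : x ≠ 0) (s : ℂ) :
    ((r : ℂ) * x) ^ s = (r : ℂ) ^ s * x ^ s := by
  have hr' : (r : ℂ) ≠ 0 := by exact_mod_cast hr.ne'
  rw [Complex.cpow_def_of_ne_zero (mul_ne_zero hr' hx), Complex.cpow_def_of_ne_zero hr',
    Complex.cpow_def_of_ne_zero hx, Complex.log_ofReal_mul hr hx, ← Complex.exp_add,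
    Complex.ofReal_log hr.le, add_mul]

/-- For `a > 0` the power `a ^ (-3/2)` is the real number `1 / (a √a)`. -/
lemma cpow_neg_three_halves {a : ℝ} (ha : 0 < a) :
    (a : ℂ) ^ (-(3 : ℂ) / 2) = ((1 / (a * Real.sqrt a) : ℝ) : ℂ) := by
  have h : (-(3 : ℂ) / 2) = ((-(1 + 1 / 2) : ℝ) : ℂ) := by push_cast; ring
  rw [h, ← Complex.ofReal_cpow ha.le, Real.rpow_neg ha.le, Real.rpow_add ha, Real.rpow_one,
    ← Real.sqrt_eq_rpow, one_div]

lemma I_cpow_add :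
    Complex.I ^ (-(3 : ℂ) / 2) + (-Complex.I) ^ (-(3 : ℂ) / 2) = -((Real.sqrt 2 : ℝ) : ℂ) := by
  rw [Complex.cpow_def_of_ne_zero Complex.I_ne_zero,
    Complex.cpow_def_of_ne_zero (neg_ne_zero.mpr Complex.I_ne_zero),
    Complex.log_I, Complex.log_neg_I]
  have h1 : (Real.pi / 2 * Complex.I * (-(3 : ℂ) / 2) : ℂ)
      = -((3 * Real.pi / 4 : ℝ) : ℂ) * Complex.I := by push_cast; ring
  have h2 : (-(Real.pi / 2 : ℂ) * Complex.I * (-(3 : ℂ) / 2) : ℂ)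
      = ((3 * Real.pi / 4 : ℝ) : ℂ) * Complex.I := by push_cast; ring
  have h3 : Real.cos (3 * Real.pi / 4) = -(Real.sqrt 2 / 2) := by
    rw [show 3 * Real.pi / 4 = Real.pi - Real.pi / 4 by ring, Real.cos_pi_sub,
      Real.cos_pi_div_four]
  rw [h1, h2, add_comm, ← Complex.two_cos, ← Complex.ofReal_cos, h3]
  push_cast
  ring

/-- The odd part of the Dirichlet series of `ζ` at `3/2`. -/
lemma hasSum_odd :
    HasSum (fun k : ℕ ↦ ((2 * k + 1 : ℝ) : ℂ) ^ (-(3 : ℂ) / 2))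
      ((1 - (2 : ℂ) ^ (-(3 : ℂ) / 2)) * riemannZeta (3 / 2)) := by
  have hre : 1 < (3 / 2 : ℂ).re := by norm_num
  set f : ℕ → ℂ := fun n ↦ (n : ℂ) ^ (-(3 : ℂ) / 2) with hf
  have hfe : (fun n : ℕ ↦ 1 / (n : ℂ) ^ (3 / 2 : ℂ)) = f := by
    ext n
    rw [hf, one_div, ← Complex.cpow_neg, neg_div]
  have hs : Summable f := hfe ▸ Complex.summable_one_div_nat_cpow.mpr hre
  have hz : riemannZeta (3 / 2) = ∑' n, f n := by
    rw [zeta_eq_tsum_one_div_nat_cpow hre, hfe]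
  have ho : Summable fun k : ℕ ↦ f (2 * k + 1) :=
    hs.comp_injective (i := fun k : ℕ ↦ 2 * k + 1) fun a b h ↦ by simpa using h
  have hmul : ∀ k : ℕ, f (2 * k) = (2 : ℂ) ^ (-(3 : ℂ) / 2) * f k := fun k ↦ by
    simpa [hf] using Complex.natCast_mul_natCast_cpow 2 k (-(3 : ℂ) / 2)
  have he : Summable fun k : ℕ ↦ f (2 * k) := by
    simp_rw [hmul]
    exact hs.mul_left _
  have key := tsum_even_add_odd he ho
  simp_rw [hmul] at key
  rw [tsum_mul_left, ← hz] at key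
  have : (1 - (2 : ℂ) ^ (-(3 : ℂ) / 2)) * riemannZeta (3 / 2) = ∑' k, f (2 * k + 1) := by
    linear_combination -key
  rw [this]
  convert ho.hasSum using 3 with k
  push_cast
  rfl

/-- `G(−1) = (1 − 2√2) ζ(3/2) / (4π)`. -/
theorem G_neg_one :
    G (-1) = ((1 - 2 * Real.sqrt 2 : ℝ) : ℂ) * riemannZeta (3 / 2) /
      (4 * (Real.pi : ℂ)) := by
  have hpi := Real.pi_pos
  have hterm : ∀ (x : ℂ), x ≠ 0 → ∀ k : ℕ,
      ((Real.pi : ℂ) * (((2 * k + 1 : ℝ) : ℂ) * x)) ^ (-(3 : ℂ) / 2)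
        = (Real.pi : ℂ) ^ (-(3 : ℂ) / 2) * x ^ (-(3 : ℂ) / 2)
          * ((2 * k + 1 : ℝ) : ℂ) ^ (-(3 : ℂ) / 2) := fun x hx k ↦ by
    have hk : (0 : ℝ) < 2 * k + 1 := by positivity
    rw [pos_mul_cpow hpi (mul_ne_zero (by exact_mod_cast hk.ne') hx), pos_mul_cpow hk hx]
    ring
  set f : ℤ → ℂ := fun n ↦
    (2 * (Real.pi : ℂ) * Complex.I * (n : ℂ) - Complex.log (-1)) ^ (-(3 : ℂ) / 2) with hf
  -- After the shift `n ↦ n + 1` the base is `iπ(2n + 1)`, which splits evenly at `n ≥ 0`, `n < 0`.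
  have hsum := HasSum.of_nat_of_neg_add_one (f := fun n ↦ f (n + 1))
    (m := (Real.pi : ℂ) ^ (-(3 : ℂ) / 2) * Complex.I ^ (-(3 : ℂ) / 2)
      * ((1 - (2 : ℂ) ^ (-(3 : ℂ) / 2)) * riemannZeta (3 / 2)))
    (m' := (Real.pi : ℂ) ^ (-(3 : ℂ) / 2) * (-Complex.I) ^ (-(3 : ℂ) / 2)
      * ((1 - (2 : ℂ) ^ (-(3 : ℂ) / 2)) * riemannZeta (3 / 2)))
    (by
      refine (hasSum_odd.mul_left _).congr_fun fun k ↦ ?_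
      rw [← hterm _ Complex.I_ne_zero, hf, Complex.log_neg_one]
      beta_reduce
      congr 1
      push_cast
      ring)
    (by
      refine (hasSum_odd.mul_left _).congr_fun fun k ↦ ?_
      rw [← hterm _ (neg_ne_zero.mpr Complex.I_ne_zero), hf, Complex.log_neg_one]
      beta_reduce
      congr 1
      push_cast
      ring)
  have htsum := ((Equiv.addRight (1 : ℤ)).tsum_eq f).symm.trans hsum.tsum_eq
  have h2 : (2 : ℂ) ^ (-(3 : ℂ) / 2) = ((1 / (2 * Real.sqrt 2) : ℝ) : ℂ) := by
    simpa using cpow_neg_three_halves (a := 2) two_pos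
  have hconst : Real.sqrt Real.pi / 2 * (1 / (Real.pi * Real.sqrt Real.pi) *
      -Real.sqrt 2 * (1 - 1 / (2 * Real.sqrt 2))) = (1 - 2 * Real.sqrt 2) / (4 * Real.pi) := by
    have h := Real.sqrt_pos.mpr hpi
    have h' : (0 : ℝ) < Real.sqrt 2 := by positivity
    field_simp
    ring
  have hconst' := congrArg (fun x : ℝ ↦ (x : ℂ)) hconst
  rw [G, htsum, ← add_mul, ← mul_add, I_cpow_add, cpow_neg_three_halves hpi, h2]
  push_cast at hconst' ⊢
  linear_combination riemannZeta (3 / 2) * hconst'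
end

section
/- For every real number u ≥ 0, G(−e^u) equals the real part of ((i − 1)/(4π)) · Σ_{n≥0} (n + 1/2 + u/(2πi))^{−3/2}, where the series converges absolutely. -/
/-- `a n = n + 1/2 + u/(2πi)`, the shifted integers in the Hurwitz series. -/
noncomputable def hurwitzPoint (u : ℝ) (n : ℕ) : ℂ :=
  (n : ℂ) + 1 / 2 + (u : ℂ) / (2 * (Real.pi : ℂ) * Complex.I)

lemma hurwitzPoint_eq (u : ℝ) (n : ℕ) :
    hurwitzPoint u n = ((n + 1 / 2 : ℝ) : ℂ) + ((-(u / (2 * Real.pi)) : ℝ) : ℂ) * Complex.I := by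
  have hpi : (Real.pi : ℂ) ≠ 0 := by exact_mod_cast Real.pi_ne_zero
  unfold hurwitzPoint
  push_cast
  field_simp
  linear_combination (u : ℂ) * Complex.I_sq

lemma hurwitzPoint_re (u : ℝ) (n : ℕ) : (hurwitzPoint u n).re = n + 1 / 2 := by
  rw [hurwitzPoint_eq, Complex.add_re, Complex.ofReal_re, Complex.re_ofReal_mul, Complex.I_re,
    mul_zero, add_zero]

lemma hurwitzPoint_re_pos (u : ℝ) (n : ℕ) : 0 < (hurwitzPoint u n).re := by
  rw [hurwitzPoint_re]
  positivity

lemma hurwitzPoint_ne_zero (u : ℝ) (n : ℕ) : hurwitzPoint u n ≠ 0 := by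
  intro h
  have := hurwitzPoint_re_pos u n
  simp [h] at this

lemma summable_norm_hurwitz (u : ℝ) :
    Summable (fun n : ℕ => ‖hurwitzPoint u n ^ (-(3 : ℂ) / 2)‖) := by
  refine Summable.of_nonneg_of_le (fun _ => norm_nonneg _) (fun n => ?_)
    ((Real.summable_one_div_nat_add_rpow (1 / 2) (3 / 2)).2 (by norm_num))
  have hexp : (-(3 : ℂ) / 2) = ((-(3 / 2) : ℝ) : ℂ) := by push_cast; ring
  have hpos : (0 : ℝ) < n + 1 / 2 := by positivity
  have hle : (n : ℝ) + 1 / 2 ≤ ‖hurwitzPoint u n‖ := by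
    rw [← hurwitzPoint_re u n]
    exact Complex.re_le_norm _
  rw [hexp, Complex.norm_cpow_real, abs_of_pos hpos, one_div, ← Real.rpow_neg hpos.le]
  exact Real.rpow_le_rpow_of_nonpos hpos hle (by norm_num)

/-- Multiplication by `-2πi` rotates the right half plane by `-π/2`, which keeps arguments inside
`(-π, 0)`; hence the principal logarithm is additive here. -/
lemma log_neg_two_pi_I_mul {a : ℂ} (ha : 0 < a.re) :
    Complex.log (-(2 * (Real.pi : ℂ) * Complex.I) * a) =
      (Real.log (2 * Real.pi) : ℂ) + Complex.log a - (Real.pi / 2 : ℝ) * Complex.I := by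
  have ha0 : a ≠ 0 := by
    rintro rfl
    simp at ha
  have h2pi : (0 : ℝ) < 2 * Real.pi := by positivity
  have harg := abs_lt.1 (Complex.abs_arg_lt_pi_div_two_iff.2 (Or.inl ha))
  have hexp : Complex.exp ((Real.log (2 * Real.pi) : ℂ) + Complex.log a
      - (Real.pi / 2 : ℝ) * Complex.I) = -(2 * (Real.pi : ℂ) * Complex.I) * a := by
    rw [Complex.exp_sub, Complex.exp_add, Complex.exp_log ha0, ← Complex.ofReal_exp,
      Real.exp_log h2pi]
    push_cast
    rw [Complex.exp_pi_div_two_mul_I, Complex.div_I]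
    ring
  rw [← hexp, Complex.log_exp]
  · simp [Complex.log_im]
    linarith
  · simp [Complex.log_im]
    linarith [Real.pi_pos]

/-- The factor `(-2πi)^{-3/2} = (2π)^{-3/2} e^{3πi/4}`, multiplied by `√π`, is the constant `(i-1)/(4π)`. -/
lemma neg_two_pi_I_mul_cpow {a : ℂ} (ha : 0 < a.re) :
    (Real.sqrt Real.pi : ℂ) * (-(2 * (Real.pi : ℂ) * Complex.I) * a) ^ (-(3 : ℂ) / 2) =
      (Complex.I - 1) / (4 * (Real.pi : ℂ)) * a ^ (-(3 : ℂ) / 2) := by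
  have ha0 : a ≠ 0 := by
    rintro rfl
    simp at ha
  have hpi : (Real.pi : ℂ) ≠ 0 := by exact_mod_cast Real.pi_ne_zero
  have h2pi : (0 : ℝ) < 2 * Real.pi := by positivity
  have hw : -(2 * (Real.pi : ℂ) * Complex.I) * a ≠ 0 := by simp [ha0, Real.pi_ne_zero]
  rw [Complex.cpow_def_of_ne_zero hw, Complex.cpow_def_of_ne_zero ha0, log_neg_two_pi_I_mul ha]
  have hsplit : ((Real.log (2 * Real.pi) : ℂ) + Complex.log a
      - (Real.pi / 2 : ℝ) * Complex.I) * (-(3 : ℂ) / 2) =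
      ((Real.log (2 * Real.pi) * (-(3 / 2)) : ℝ) : ℂ)
        + ((Real.pi - Real.pi / 4 : ℝ) : ℂ) * Complex.I + Complex.log a * (-(3 : ℂ) / 2) := by
    push_cast
    ring
  have hmod : Real.exp (Real.log (2 * Real.pi) * (-(3 / 2))) =
      1 / (2 * Real.pi * (Real.sqrt 2 * Real.sqrt Real.pi)) := by
    rw [← Real.rpow_def_of_pos h2pi, Real.rpow_neg h2pi.le, one_div,
      show (3 / 2 : ℝ) = 1 + 1 / 2 by norm_num, Real.rpow_add h2pi, Real.rpow_one,
      ← Real.sqrt_eq_rpow, Real.sqrt_mul (by norm_num)]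
  have harg : Complex.exp (((Real.pi - Real.pi / 4 : ℝ) : ℂ) * Complex.I) =
      (Real.sqrt 2 / 2 : ℝ) * (Complex.I - 1) := by
    rw [Complex.exp_mul_I, ← Complex.ofReal_cos, ← Complex.ofReal_sin, Real.cos_pi_sub,
      Real.sin_pi_sub, Real.cos_pi_div_four, Real.sin_pi_div_four]
    push_cast
    ring
  rw [hsplit, Complex.exp_add, Complex.exp_add, ← Complex.ofReal_exp, hmod, harg]
  have hs2 : (Real.sqrt 2 : ℂ) ≠ 0 := by simp
  have hsp : (Real.sqrt Real.pi : ℂ) ≠ 0 := by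
    exact_mod_cast (Real.sqrt_pos.2 Real.pi_pos).ne'
  push_cast
  field_simp
  ring

lemma log_neg_exp (u : ℝ) :
    Complex.log (-(Real.exp u : ℂ)) = (u : ℂ) + (Real.pi : ℂ) * Complex.I := by
  have h : -(Real.exp u : ℂ) = Complex.exp ((u : ℂ) + (Real.pi : ℂ) * Complex.I) := by
    rw [Complex.exp_add, Complex.exp_pi_mul_I, Complex.ofReal_exp]
    ring
  rw [h, Complex.log_exp]
  · simp
    linarith [Real.pi_pos]
  · simp

lemma G_base_neg (u : ℝ) (n : ℕ) :
    2 * (Real.pi : ℂ) * Complex.I * ((-(n : ℤ) : ℤ) : ℂ) - ((u : ℂ) + (Real.pi : ℂ) * Complex.I) =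
      -(2 * (Real.pi : ℂ) * Complex.I) * hurwitzPoint u n := by
  have hpi : (Real.pi : ℂ) ≠ 0 := by exact_mod_cast Real.pi_ne_zero
  unfold hurwitzPoint
  push_cast
  field_simp
  ring

/-- The base of the term of index `n + 1` in the bilateral series is the conjugate of the base of
the term of index `-n`, computed in `G_base_neg`. -/
lemma G_base_pos (u : ℝ) (n : ℕ) :
    2 * (Real.pi : ℂ) * Complex.I * (((n + 1 : ℕ) : ℤ) : ℂ)
        - ((u : ℂ) + (Real.pi : ℂ) * Complex.I) =
      (starRingEnd ℂ) (-(2 * (Real.pi : ℂ) * Complex.I) * hurwitzPoint u n) := by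
  rw [← G_base_neg]
  simp [Complex.conj_ofNat]
  ring

lemma arg_neg_two_pi_I_mul_ne_pi {a : ℂ} (ha : 0 < a.re) :
    Complex.arg (-(2 * (Real.pi : ℂ) * Complex.I) * a) ≠ Real.pi := by
  intro h
  have him := (Complex.arg_eq_pi_iff.1 h).2
  simp [Real.pi_ne_zero] at him
  exact ha.ne' him

/-- For real `u ≥ 0`, the series `Σ_{n≥0} (n + 1/2 + u/(2πi))^{−3/2}` converges
absolutely and `G(−e^u)` equals the real part of
`((i−1)/(4π)) Σ_{n≥0} (n + 1/2 + u/(2πi))^{−3/2}`. -/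
theorem G_neg_exp_hurwitz (u : ℝ) (hu : 0 ≤ u) :
    Summable (fun n : ℕ =>
      ‖((n : ℂ) + 1 / 2 + (u : ℂ) / (2 * (Real.pi : ℂ) * Complex.I)) ^ (-(3 : ℂ) / 2)‖) ∧
    G (-(Real.exp u : ℂ)) =
      (Complex.re (((Complex.I - 1) / (4 * (Real.pi : ℂ))) *
        ∑' n : ℕ, ((n : ℂ) + 1 / 2 +
          (u : ℂ) / (2 * (Real.pi : ℂ) * Complex.I)) ^ (-(3 : ℂ) / 2)) : ℂ) := by
  refine ⟨summable_norm_hurwitz u, ?_⟩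
  have hS := (summable_norm_hurwitz u).of_norm.hasSum
  change G _ = (Complex.re (((Complex.I - 1) / (4 * (Real.pi : ℂ))) *
    ∑' n : ℕ, hurwitzPoint u n ^ (-(3 : ℂ) / 2)) : ℂ)
  set S : ℂ := ((Complex.I - 1) / (4 * (Real.pi : ℂ))) *
    ∑' n : ℕ, hurwitzPoint u n ^ (-(3 : ℂ) / 2) with hSdef
  -- absorbing `√π` into the terms makes the constant `(i - 1)/(4π)` appear termwise
  let f : ℤ → ℂ := fun n => (Real.sqrt Real.pi : ℂ) *
    (2 * (Real.pi : ℂ) * Complex.I * (n : ℂ) - Complex.log (-(Real.exp u : ℂ))) ^ (-(3 : ℂ) / 2)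
  have hneg : HasSum (fun n : ℕ => f (-(n : ℤ))) S := by
    have h := hS.mul_left ((Complex.I - 1) / (4 * (Real.pi : ℂ)))
    refine h.congr_fun ?_
    intro n
    simp only [f]
    rw [log_neg_exp, G_base_neg, neg_two_pi_I_mul_cpow (hurwitzPoint_re_pos u n)]
  have hconj : ∀ n : ℕ, f ((n : ℤ) + 1) = (starRingEnd ℂ) (f (-(n : ℤ))) := by
    intro n
    have hbase := G_base_pos u n
    have hs : (starRingEnd ℂ) (-(3 : ℂ) / 2) = -(3 : ℂ) / 2 := by simp [Complex.conj_ofNat]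
    simp only [f]
    rw [log_neg_exp, G_base_neg, map_mul, Complex.conj_ofReal]
    rw [show ((n : ℤ) + 1) = ((n + 1 : ℕ) : ℤ) by push_cast; rfl, hbase,
      Complex.conj_cpow _ _ (arg_neg_two_pi_I_mul_ne_pi (hurwitzPoint_re_pos u n)), hs]
  have hpos : HasSum (fun n : ℕ => f ((n : ℤ) + 1)) ((starRingEnd ℂ) S) := by
    simp only [hconj]
    exact Complex.hasSum_conj'.2 (by simpa using hneg)
  -- reflecting `n ↦ -n` sends the index sets `n ≤ 0` and `n ≥ 1` to `n ≥ 0` and `n ≤ -1`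
  have hZ : HasSum (fun n : ℤ => f (-n)) (S + (starRingEnd ℂ) S) := by
    refine HasSum.of_nat_of_neg_add_one hneg ?_
    simpa using hpos
  have hf : ∑' n : ℤ, f n = S + (starRingEnd ℂ) S := by
    rw [← (Equiv.neg ℤ).tsum_eq f]
    exact hZ.tsum_eq
  rw [Complex.add_conj, tsum_mul_left] at hf
  unfold G
  rw [div_mul_eq_mul_div, hf]
  push_cast
  ring
end

section
/- For every fixed real number x, the limit as u → +∞ (along the reals) of e^u · Γ(u − 2x + 1/2) · u^{2x − u} equals √(2π). -/
/-!
Everything is done for logarithms. Put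
`F s = log Γ(s) - (s - 1/2) log s + s` (`logGammaRemainder`). Stirling's formula for factorials
says `F n → log √(2π)` along the integers. Log-convexity of `Γ` traps `log Γ(n + t)`, for
`0 ≤ t ≤ 1`, between `log Γ(n) + t log (n - 1)` and `log Γ(n) + t log n`, which gives
`|F (n + t) - F n| ≤ 2 / (n - 1)` and hence `F s → log √(2π)` along the reals.

With `s = u - 2x + 1/2` and `c = 2x - 1/2`, so that `u = s + c`, the logarithm of the expression
in the theorem is `F s + c - (s - 1/2) log (1 + c / s)`, and `(s - 1/2) log (1 + c / s) → c`.
-/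

open Filter

/-- The logarithm of the ratio of `Γ(s)` to `s ^ (s - 1/2) * e ^ (-s)`, for `s > 0`. -/
noncomputable def logGammaRemainder (s : ℝ) : ℝ :=
  Real.log (Real.Gamma s) - (s - 1 / 2) * Real.log s + s

lemma log_Gamma_add_one {y : ℝ} (hy : 0 < y) :
    (Real.log ∘ Real.Gamma) (y + 1) = (Real.log ∘ Real.Gamma) y + Real.log y := by
  simp only [Function.comp_apply]
  rw [Real.Gamma_add_one hy.ne', Real.log_mul hy.ne' (Real.Gamma_pos_of_pos hy).ne', add_comm]

lemma tendsto_logGammaRemainder_nat :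
    Tendsto (fun n : ℕ => logGammaRemainder n) atTop
      (nhds (Real.log (Real.sqrt (2 * Real.pi)))) := by
  have h := (Stirling.tendsto_stirlingSeq_sqrt_pi.log (by positivity)).add_const
    (1 / 2 * Real.log 2)
  have e : Real.log (Real.sqrt Real.pi) + 1 / 2 * Real.log 2
      = Real.log (Real.sqrt (2 * Real.pi)) := by
    rw [Real.log_sqrt (by positivity), Real.log_sqrt (by positivity),
      Real.log_mul (by positivity) (by positivity)]
    ring
  rw [e] at h
  refine h.congr' ?_
  filter_upwards [eventually_ge_atTop 1] with n hn
  have hn0 : (0 : ℝ) < n := by exact_mod_cast hn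
  have h1 := log_Gamma_add_one hn0
  simp only [Function.comp_apply, Real.Gamma_nat_eq_factorial] at h1
  rw [Stirling.log_stirlingSeq_formula, logGammaRemainder, h1,
    Real.log_mul (by positivity) (by positivity), Real.log_div (by positivity) (by positivity),
    Real.log_exp]
  ring

lemma abs_logGammaRemainder_sub_le {n : ℕ} (hn : 2 ≤ n) {t : ℝ} (ht : 0 ≤ t) (ht1 : t ≤ 1) :
    |logGammaRemainder (n + t) - logGammaRemainder n| ≤ 2 / ((n : ℝ) - 1) := by
  have hn2 : (2 : ℝ) ≤ n := by exact_mod_cast hn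
  have hn0 : (0 : ℝ) < n := by linarith
  have hn1 : (0 : ℝ) < (n : ℝ) - 1 := by linarith
  rcases ht.eq_or_lt with rfl | ht
  · simp only [add_zero, sub_self, abs_zero]
    positivity
  have hup := Real.BohrMollerup.f_add_nat_le Real.convexOn_log_Gamma log_Gamma_add_one
    (by lia : n ≠ 0) ht ht1
  have hlo := Real.BohrMollerup.f_add_nat_ge Real.convexOn_log_Gamma log_Gamma_add_one hn ht
  simp only [Function.comp_apply] at hup hlo
  have hnt : (0 : ℝ) < n + t := by linarith
  -- `log ((n - 1) / n) ≥ -1 / (n - 1)`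
  have hA : -(1 / ((n : ℝ) - 1)) ≤ t * Real.log ((n : ℝ) - 1) - t * Real.log n := by
    have h := Real.log_le_sub_one_of_pos (div_pos hn0 hn1)
    rw [Real.log_div hn0.ne' hn1.ne'] at h
    have e : (n : ℝ) / ((n : ℝ) - 1) - 1 = 1 / ((n : ℝ) - 1) := by field_simp; ring
    rw [e] at h
    have hp : 0 < 1 / ((n : ℝ) - 1) := by positivity
    nlinarith
  -- `t / (n + t) ≤ log (1 + t / n) ≤ t / n`
  have hB := Real.log_le_sub_one_of_pos (div_pos hnt hn0)
  have hC := Real.log_le_sub_one_of_pos (div_pos hn0 hnt)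
  rw [Real.log_div hnt.ne' hn0.ne'] at hB
  rw [Real.log_div hn0.ne' hnt.ne'] at hC
  have hpos : 0 ≤ (n : ℝ) + t - 1 / 2 := by linarith
  have hB' := mul_le_mul_of_nonneg_left hB hpos
  have hC' := mul_le_mul_of_nonneg_left hC hpos
  have hB2 : ((n : ℝ) + t - 1 / 2) * ((n + t) / n - 1) ≤ t + 1 / ((n : ℝ) - 1) := by
    have e : ((n : ℝ) + t - 1 / 2) * ((n + t) / n - 1) = t + (t - 1 / 2) * t / n := by
      field_simp; ring
    have : (t - 1 / 2) * t / n ≤ 1 / ((n : ℝ) - 1) :=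
      div_le_div₀ zero_le_one (by nlinarith) hn1 (by linarith)
    linarith
  have hC2 : ((n : ℝ) + t - 1 / 2) * (n / (n + t) - 1) ≤ -t + 1 / ((n : ℝ) - 1) := by
    have e : ((n : ℝ) + t - 1 / 2) * (n / (n + t) - 1) = -t + t / 2 / (n + t) := by
      field_simp; ring
    have : t / 2 / (n + t) ≤ 1 / ((n : ℝ) - 1) :=
      div_le_div₀ zero_le_one (by linarith) hn1 (by linarith)
    linarith
  have e2 : 2 / ((n : ℝ) - 1) = 1 / ((n : ℝ) - 1) + 1 / ((n : ℝ) - 1) := by ring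
  rw [abs_le, e2]
  have hp : 0 < 1 / ((n : ℝ) - 1) := by positivity
  unfold logGammaRemainder
  constructor <;> nlinarith

lemma tendsto_logGammaRemainder :
    Tendsto logGammaRemainder atTop (nhds (Real.log (Real.sqrt (2 * Real.pi)))) := by
  have hfl : Tendsto (fun s : ℝ => ⌊s⌋₊) atTop atTop := tendsto_nat_floor_atTop
  have h1 := tendsto_logGammaRemainder_nat.comp hfl
  have h2 : Tendsto (fun s : ℝ => logGammaRemainder s - logGammaRemainder (⌊s⌋₊ : ℝ)) atTop
      (nhds 0) := by
    have hb : Tendsto (fun s : ℝ => 2 / ((⌊s⌋₊ : ℝ) - 1)) atTop (nhds 0) :=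
      ((tendsto_atTop_add_const_right _ (-1 : ℝ)
        (tendsto_natCast_atTop_atTop.comp hfl))).const_div_atTop 2
    refine squeeze_zero_norm' ?_ hb
    filter_upwards [eventually_ge_atTop (2 : ℝ)] with s hs
    have h := abs_logGammaRemainder_sub_le (n := ⌊s⌋₊) (Nat.le_floor (by exact_mod_cast hs))
      (t := s - ⌊s⌋₊) (sub_nonneg.2 (Nat.floor_le (by linarith)))
      (by linarith [Nat.lt_floor_add_one s])
    rwa [add_sub_cancel] at h
  simpa using h2.add h1

/-- For every fixed real `x`, `e^u Γ(u − 2x + 1/2) u^{2x−u} → √(2π)` as `u → +∞`. -/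
theorem stirling_limit (x : ℝ) :
    Tendsto (fun u : ℝ =>
        Real.exp u * Real.Gamma (u - 2 * x + 1 / 2) * u ^ (2 * x - u))
      atTop (nhds (Real.sqrt (2 * Real.pi))) := by
  set c : ℝ := 2 * x - 1 / 2 with hc
  have hs : Tendsto (fun u : ℝ => u - c) atTop atTop :=
    tendsto_atTop_add_const_right _ (-c) tendsto_id
  have hlog : Tendsto (fun s : ℝ => Real.log (1 + c / s)) atTop (nhds 0) := by
    have h : Tendsto (fun s : ℝ => 1 + c / s) atTop (nhds (1 + 0)) :=
      (tendsto_id.const_div_atTop c).const_add 1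
    simpa using h.log (by norm_num)
  have hG : Tendsto (fun s : ℝ => logGammaRemainder s + c
      - (s * Real.log (1 + c / s) - 1 / 2 * Real.log (1 + c / s))) atTop
      (nhds (Real.log (Real.sqrt (2 * Real.pi)))) := by
    have h := (tendsto_logGammaRemainder.add_const c).sub
      ((Real.tendsto_mul_log_one_add_div_atTop c).sub (hlog.const_mul (1 / 2)))
    simpa using h
  have hE := (Real.continuous_exp.tendsto _).comp (hG.comp hs)
  rw [Real.exp_log (by positivity)] at hE
  refine hE.congr' ?_
  filter_upwards [eventually_gt_atTop (0 : ℝ), eventually_gt_atTop c] with u hu huc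
  have hs0 : 0 < u - c := by linarith
  have e1 : u - 2 * x + 1 / 2 = u - c := by rw [hc]; ring
  have e2 : 1 + c / (u - c) = u / (u - c) := by field_simp; ring
  simp only [Function.comp_apply]
  rw [e1, e2, Real.rpow_def_of_pos hu, ← Real.exp_log (Real.Gamma_pos_of_pos hs0),
    ← Real.exp_add, ← Real.exp_add, Real.log_div hu.ne' hs0.ne', logGammaRemainder]
  congr 1
  rw [hc]
  ring
end

section
/- For every fixed real number x, the limit as u → +∞ (along the reals) of u · ((e^u/√(2π)) · Γ(u − 2x + 1/2) · u^{2x − u} − 1) equals 2x² − 1/24; that is, the second coefficient in the asymptotic expansion of (e^u/√(2π)) Γ(u − 2x + 1/2) u^{2x−u} is Δ_1(x) = 2x² − 1/24. -/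
/-!
Write `a = 1/2 - 2x` and let `R(u) = log Γ(u + a) - ((u + a - 1/2) log u - u + log(2π)/2)` be the
logarithm of the normalised Gamma factor. The functional equation of `Γ` makes the difference
`R(u) - R(u + 1) = (u + a + 1/2) log(1 + 1/u) - log(1 + a/u) - 1` elementary, and the third order
Taylor expansion of the logarithm gives `u² (R(u) - R(u + 1)) → c` with
`c = a²/2 - a/2 + 1/12 = 2x² - 1/24` (`tendsto_sq_mul_logRemainder_diff`). Along each progression
`u + ℕ` the remainder tends to `0`, by Euler's limit formula for `log Γ` together with Stirling's
formula for `n!` (`tendsto_logRemainder_add_nat`). Since `1/u - 1/(u + 1) = 1/(u (u + 1))`,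
telescoping along the progression yields `u R(u) → c` (`tendsto_mul_of_telescoping`), and
`u (exp R(u) - 1)` has the same limit because `R(u) → 0`.
-/

open Filter Topology

/-- The error of the leading Stirling approximation to `log Γ(u + a)`. -/
noncomputable def logRemainder (a u : ℝ) : ℝ :=
  Real.log (Real.Gamma (u + a)) -
    ((u + a - 1 / 2) * Real.log u - u + Real.log (2 * Real.pi) / 2)

/-- A function that does not increase under unit steps from `u` on and tends to `0` along `u + ℕ` is
nonnegative at `u`. -/
lemma nonneg_of_step {f : ℝ → ℝ} {u : ℝ} (hstep : ∀ v, u ≤ v → f (v + 1) ≤ f v)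
    (hlim : Tendsto (fun n : ℕ => f (u + n)) atTop (𝓝 0)) : 0 ≤ f u := by
  have hanti : Antitone (fun n : ℕ => f (u + n)) := by
    refine antitone_nat_of_succ_le fun n => ?_
    have := hstep (u + n) (by linarith [n.cast_nonneg (α := ℝ)])
    push_cast
    rwa [← add_assoc]
  simpa using hanti.le_of_tendsto hlim 0

/-- A discrete l'Hôpital rule: if `R` vanishes at infinity along unit progressions, then
comparing its unit differences with those of `c / u` gives the asymptotics of `R` itself. -/
lemma tendsto_mul_of_telescoping {R : ℝ → ℝ} {c : ℝ}
    (hlim : ∀ᶠ u in atTop, Tendsto (fun n : ℕ => R (u + n)) atTop (𝓝 0))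
    (hdiff : Tendsto (fun u => u * (u + 1) * (R u - R (u + 1))) atTop (𝓝 c)) :
    Tendsto (fun u => u * R u) atTop (𝓝 c) := by
  rw [Metric.tendsto_nhds]
  intro ε hε
  have h1 := (Metric.tendsto_nhds.1 hdiff (ε / 2) (by positivity))
  obtain ⟨U, hU⟩ := eventually_atTop.1 (h1.and (eventually_gt_atTop 0))
  filter_upwards [hlim, eventually_ge_atTop U] with u hu hUu
  have hupos : 0 < u := (hU u hUu).2
  have hinv : ∀ k : ℝ, Tendsto (fun n : ℕ => k / (u + n)) atTop (𝓝 0) := fun k =>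
    tendsto_const_nhds.div_atTop
      (tendsto_atTop_add_const_left _ _ tendsto_natCast_atTop_atTop)
  have hdecomp : ∀ v, u ≤ v → ∀ k : ℝ, k / v - k / (v + 1) = k / (v * (v + 1)) := by
    intro v hv k
    have : 0 < v := by linarith
    field_simp
    ring
  have hlow : 0 ≤ R u - (c - ε / 2) / u := by
    refine nonneg_of_step (f := fun v => R v - (c - ε / 2) / v) (fun v hv => ?_)
      (by simpa using hu.sub (hinv (c - ε / 2)))
    obtain ⟨h2, hv0⟩ := hU v (by linarith)
    rw [Real.dist_eq, abs_lt] at h2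
    have h3 : (c - ε / 2) / (v * (v + 1)) ≤ R v - R (v + 1) := by
      rw [div_le_iff₀ (by positivity)]
      linarith
    have := hdecomp v hv (c - ε / 2)
    linarith
  have hupp : 0 ≤ (c + ε / 2) / u - R u := by
    refine nonneg_of_step (f := fun v => (c + ε / 2) / v - R v) (fun v hv => ?_)
      (by simpa using (hinv (c + ε / 2)).sub hu)
    obtain ⟨h2, hv0⟩ := hU v (by linarith)
    rw [Real.dist_eq, abs_lt] at h2
    have h3 : R v - R (v + 1) ≤ (c + ε / 2) / (v * (v + 1)) := by
      rw [le_div_iff₀ (by positivity)]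
      linarith
    have := hdecomp v hv (c + ε / 2)
    linarith
  have h4 : c - ε / 2 ≤ R u * u := (div_le_iff₀ hupos).1 (by linarith)
  have h5 : R u * u ≤ c + ε / 2 := (le_div_iff₀ hupos).1 (by linarith)
  rw [Real.dist_eq, abs_lt]
  constructor <;> linarith

/-- The Taylor expansion of `log (1 + s / u)` to third order, with error `o(u⁻³)`. -/
lemma tendsto_log_taylor (s : ℝ) :
    Tendsto (fun u : ℝ => u ^ 3 *
      (Real.log (1 + s / u) - s / u + s ^ 2 / (2 * u ^ 2) - s ^ 3 / (3 * u ^ 3)))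
      atTop (𝓝 0) := by
  have hg : Tendsto (fun u : ℝ => 2 * |s| ^ 4 / u) atTop (𝓝 0) :=
    tendsto_const_nhds.div_atTop tendsto_id
  refine squeeze_zero_norm' ?_ hg
  filter_upwards [eventually_gt_atTop (2 * |s|), eventually_gt_atTop 0] with u hu hu0
  have habs : |-(s / u)| = |s| / u := by rw [abs_neg, abs_div, abs_of_pos hu0]
  have hhalf : |s| / u ≤ 1 / 2 := by
    rw [div_le_iff₀ hu0]
    linarith
  have h := Real.abs_log_sub_add_sum_range_le (x := -(s / u)) (by rw [habs]; linarith) 3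
  rw [habs] at h
  have hsum : (∑ i ∈ Finset.range 3, (-(s / u)) ^ (i + 1) / ((i : ℝ) + 1)) + Real.log (1 - -(s / u))
      = Real.log (1 + s / u) - s / u + s ^ 2 / (2 * u ^ 2) - s ^ 3 / (3 * u ^ 3) := by
    rw [sub_neg_eq_add]
    simp only [Finset.sum_range_succ, Finset.sum_range_zero]
    push_cast
    field_simp
    ring
  rw [hsum] at h
  rw [Real.norm_eq_abs, abs_mul, abs_of_pos (pow_pos hu0 3)]
  calc _ ≤ u ^ 3 * ((|s| / u) ^ (3 + 1) / (1 - |s| / u)) := by gcongr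
    _ ≤ u ^ 3 * ((|s| / u) ^ (3 + 1) / (1 / 2)) := by
      gcongr
      linarith
    _ = 2 * |s| ^ 4 / u := by
      rw [div_pow]
      field_simp

lemma logRemainder_diff {a u : ℝ} (hu : 0 < u) (hua : 0 < u + a) :
    logRemainder a u - logRemainder a (u + 1) =
      (u + a + 1 / 2) * Real.log (1 + 1 / u) - Real.log (1 + a / u) - 1 := by
  have h1 : Real.log (1 + 1 / u) = Real.log (u + 1) - Real.log u := by
    rw [← Real.log_div (by positivity) (by positivity)]
    congr 1
    field_simp
  have h2 : Real.log (1 + a / u) = Real.log (u + a) - Real.log u := by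
    rw [← Real.log_div (by positivity) (by positivity)]
    congr 1
    field_simp
  have h3 : Real.log (Real.Gamma (u + 1 + a)) =
      Real.log (u + a) + Real.log (Real.Gamma (u + a)) := by
    rw [show u + 1 + a = (u + a) + 1 by ring, Real.Gamma_add_one hua.ne',
      Real.log_mul hua.ne' (Real.Gamma_pos_of_pos hua).ne']
  unfold logRemainder
  rw [h1, h2, h3]
  ring

lemma tendsto_sq_mul_logRemainder_diff (a : ℝ) :
    Tendsto (fun u : ℝ => u ^ 2 * (logRemainder a u - logRemainder a (u + 1))) atTop
      (𝓝 (a ^ 2 / 2 - a / 2 + 1 / 12)) := by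
  have hinv : Tendsto (fun u : ℝ => u⁻¹) atTop (𝓝 0) := tendsto_inv_atTop_zero
  have hmain := ((((tendsto_log_taylor a).neg.mul hinv).sub
    (hinv.const_mul (a ^ 3 / 3))).add
    (((hinv.const_mul (a + 1 / 2)).const_add 1).mul (tendsto_log_taylor 1))).add
    (((hinv.const_mul ((a + 1 / 2) / 3))).add_const (a ^ 2 / 2 - a / 2 + 1 / 12))
  simp only [neg_zero, mul_zero, sub_zero, add_zero, zero_add] at hmain
  refine hmain.congr' ?_
  filter_upwards [eventually_gt_atTop 0, eventually_gt_atTop (-a)] with u hu hua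
  rw [logRemainder_diff hu (by linarith)]
  field_simp
  ring

/-- Stirling's formula for factorials in logarithmic form. -/
lemma tendsto_log_factorial :
    Tendsto (fun n : ℕ => Real.log (n.factorial : ℝ) -
      ((n + 1 / 2) * Real.log n - n + Real.log (2 * Real.pi) / 2)) atTop (𝓝 0) := by
  have h := (Stirling.tendsto_stirlingSeq_sqrt_pi.log (by positivity)).sub_const
    (Real.log (Real.sqrt Real.pi))
  rw [sub_self] at h
  refine h.congr' ?_
  filter_upwards [eventually_gt_atTop 0] with n hn
  have hn' : (0 : ℝ) < n := by exact_mod_cast hn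
  rw [Stirling.log_stirlingSeq_formula, Real.log_sqrt Real.pi_pos.le,
    Real.log_mul two_ne_zero hn'.ne', Real.log_mul two_ne_zero Real.pi_ne_zero,
    Real.log_div hn'.ne' (Real.exp_pos 1).ne', Real.log_exp]
  ring

/-- Euler's limit formula, rewritten as the asymptotics of `log Γ(y + n + 1)` against `log n!`. -/
lemma tendsto_log_Gamma_add_nat {y : ℝ} (hy : 0 < y) :
    Tendsto (fun n : ℕ => Real.log (Real.Gamma (y + n + 1)) -
      (y * Real.log n + Real.log (n.factorial : ℝ))) atTop (𝓝 0) := by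
  have h := (Real.BohrMollerup.tendsto_log_gamma hy).const_sub (Real.log (Real.Gamma y))
  rw [sub_self] at h
  refine h.congr fun n => ?_
  have hfe : Real.log (Real.Gamma (y + (n + 1 : ℕ))) = Real.log (Real.Gamma y) +
      ∑ m ∈ Finset.range (n + 1), Real.log (y + m) :=
    Real.BohrMollerup.f_add_nat_eq (f := Real.log ∘ Real.Gamma) (fun {z} hz => by
      simp only [Function.comp]
      rw [Real.Gamma_add_one hz.ne', Real.log_mul hz.ne' (Real.Gamma_pos_of_pos hz).ne',
        add_comm]) hy (n + 1)
  rw [Nat.cast_add_one, ← add_assoc] at hfe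
  rw [hfe, Real.BohrMollerup.logGammaSeq]
  ring

lemma tendsto_logRemainder_add_nat {a u : ℝ} (hu : 0 < u) (hua : 0 < u + a) :
    Tendsto (fun n : ℕ => logRemainder a (u + n)) atTop (𝓝 0) := by
  rw [← tendsto_add_atTop_iff_nat 1]
  have hlog : Tendsto (fun n : ℕ => (n : ℝ) * Real.log (1 + (u + 1) / n)) atTop (𝓝 (u + 1)) :=
    (Real.tendsto_mul_log_one_add_div_atTop (u + 1)).comp tendsto_natCast_atTop_atTop
  have hinv : Tendsto (fun n : ℕ => ((n : ℝ))⁻¹) atTop (𝓝 0) :=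
    tendsto_inv_atTop_zero.comp tendsto_natCast_atTop_atTop
  have hfac := ((hinv.const_mul (u + a + 1 / 2)).const_add 1).mul hlog
  have h := ((tendsto_log_Gamma_add_nat hua).add tendsto_log_factorial).sub
    (hfac.sub_const (u + 1))
  simp only [mul_zero, add_zero, one_mul, sub_self] at h
  refine h.congr' ?_
  filter_upwards [eventually_gt_atTop 0] with n hn
  have hn' : (0 : ℝ) < n := by exact_mod_cast hn
  have h1 : Real.log (1 + (u + 1) / n) = Real.log (u + (n + 1)) - Real.log n := by
    rw [← Real.log_div (by positivity) (by positivity)]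
    congr 1
    field_simp
    ring
  rw [h1]
  unfold logRemainder
  rw [Nat.cast_add_one, show u + (n + 1 : ℝ) + a = u + a + n + 1 by ring]
  field_simp
  ring

lemma tendsto_mul_logRemainder (a : ℝ) :
    Tendsto (fun u => u * logRemainder a u) atTop (𝓝 (a ^ 2 / 2 - a / 2 + 1 / 12)) := by
  refine tendsto_mul_of_telescoping ?_ ?_
  · filter_upwards [eventually_gt_atTop 0, eventually_gt_atTop (-a)] with u hu hua
    exact tendsto_logRemainder_add_nat hu (by linarith)
  · have h := (tendsto_inv_atTop_zero.const_add (1 : ℝ)).mul (tendsto_sq_mul_logRemainder_diff a)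
    rw [add_zero, one_mul] at h
    refine h.congr' ?_
    filter_upwards [eventually_gt_atTop 0] with u hu
    field_simp

/-- Exponentiating a quantity of size `c / u` preserves the first coefficient. -/
lemma tendsto_mul_exp_sub_one {R : ℝ → ℝ} {c : ℝ}
    (h : Tendsto (fun u => u * R u) atTop (𝓝 c)) :
    Tendsto (fun u => u * (Real.exp (R u) - 1)) atTop (𝓝 c) := by
  have hR : Tendsto R atTop (𝓝 0) := by
    have h1 := tendsto_inv_atTop_zero.mul h
    rw [zero_mul] at h1
    refine h1.congr' ?_
    filter_upwards [eventually_gt_atTop 0] with u hu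
    field_simp
  -- The slope `(exp r - 1) / r`, extended by `1` at `r = 0`, is continuous there.
  have hs : Tendsto (fun u => dslope Real.exp 0 (R u)) atTop (𝓝 1) := by
    have hc : ContinuousAt (dslope Real.exp 0) 0 :=
      continuousAt_dslope_same.2 Real.differentiableAt_exp
    have h2 := hc.tendsto.comp hR
    rwa [dslope_same, Real.deriv_exp, Real.exp_zero] at h2
  have h3 := h.mul hs
  rw [mul_one] at h3
  refine h3.congr fun u => ?_
  have h4 := sub_smul_dslope Real.exp 0 (R u)
  rw [sub_zero, smul_eq_mul, Real.exp_zero] at h4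
  rw [mul_assoc, h4]

/-- For every fixed real `x`,
`u ((e^u/√(2π)) Γ(u − 2x + 1/2) u^{2x−u} − 1) → 2x² − 1/24` as `u → +∞`;
i.e. the second coefficient of the asymptotic expansion is `Δ_1(x) = 2x² − 1/24`. -/
theorem stirling_second_coefficient (x : ℝ) :
    Tendsto (fun u : ℝ =>
        u * (Real.exp u / Real.sqrt (2 * Real.pi) *
          Real.Gamma (u - 2 * x + 1 / 2) * u ^ (2 * x - u) - 1))
      atTop (nhds (2 * x ^ 2 - 1 / 24)) := by
  have h := tendsto_mul_exp_sub_one (tendsto_mul_logRemainder (1 / 2 - 2 * x))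
  rw [show (1 / 2 - 2 * x) ^ 2 / 2 - (1 / 2 - 2 * x) / 2 + 1 / 12 = 2 * x ^ 2 - 1 / 24 by ring] at h
  refine h.congr' ?_
  filter_upwards [eventually_gt_atTop 0, eventually_gt_atTop (2 * x)] with u hu hux
  have hG : 0 < Real.Gamma (u - 2 * x + 1 / 2) := Real.Gamma_pos_of_pos (by linarith)
  have hpi : 0 < 2 * Real.pi := by positivity
  have hexp : logRemainder (1 / 2 - 2 * x) u = u - Real.log (Real.sqrt (2 * Real.pi)) +
      Real.log (Real.Gamma (u - 2 * x + 1 / 2)) + Real.log u * (2 * x - u) := by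
    rw [logRemainder, Real.log_sqrt hpi.le,
      show u + (1 / 2 - 2 * x) = u - 2 * x + 1 / 2 by ring]
    ring
  rw [hexp, Real.exp_add, Real.exp_add, Real.exp_sub, Real.exp_log (Real.sqrt_pos.2 hpi),
    Real.exp_log hG, Real.rpow_def_of_pos hu]
end
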